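/- arXiv:1411.0251 — 4 statements merged into one kernel-verified Lean document; each statement's English description precedes it below -/
import Mathlib

section
/- Let k ∈ ℕ with k ≥ 1 and let u(y) = exp(i y^{2k+1}) for y ∈ ℝ. Then the Gabor wave front set of u equals the positive frequency half-axis: WF(u) = {0} × { ξ ∈ ℝ : ξ > 0 } ⊆ ℝ² \ {0}. -/
open MeasureTheory

namespace Stmt15

/-- Gaussian-window short-time Fourier transform of `u : ℝ → ℂ`:
`Vu(x,ξ) = ∫ u(y) e^{−iyξ} e^{−(y−x)²} dy`. -/
noncomputable def STFT (u : ℝ → ℂ) (x ξ : ℝ) : ℂ :=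
  ∫ y : ℝ, u y * Complex.exp (-(Complex.I) * (y : ℂ) * (ξ : ℂ))
    * Complex.exp (-(((y - x) ^ 2 : ℝ) : ℂ))

/-- An open cone in `ℝ² \ {0}`. -/
def IsOpenCone (Γ : Set (ℝ × ℝ)) : Prop :=
  IsOpen Γ ∧ (0 : ℝ × ℝ) ∉ Γ ∧ ∀ z ∈ Γ, ∀ r : ℝ, 0 < r → r • z ∈ Γ

/-- The Gabor wave front set of `u : ℝ → ℂ`: the set of `z₀ ∈ ℝ² \ {0}` such that there is
no open cone containing `z₀` on which `Vu` decays faster than any power. -/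
def gaborWF (u : ℝ → ℂ) : Set (ℝ × ℝ) :=
  {z | z ≠ 0 ∧ ¬ ∃ Γ : Set (ℝ × ℝ), IsOpenCone Γ ∧ z ∈ Γ ∧
    ∀ N : ℕ, ∃ M : ℝ, ∀ w ∈ Γ,
      (1 + w.1 ^ 2 + w.2 ^ 2) ^ ((N : ℝ) / 2) * ‖STFT u w.1 w.2‖ ≤ M}

/-! Let `φ` be an entire phase, real on `ℝ`, with `Im φ(y + iη) ≥ η (δ y² - K)` for `0 ≤ η ≤ 1`,
and let `u = exp(iφ)`. Moving the contour in `Vu` to `Im z = 1` gives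
`|Vu(x,ξ)| ≤ A exp(ξ - δ' x²)`, which decays rapidly on every sector `ξ < c|x|`, so only the
half-axis `x = 0 < ξ` can meet the wave front set. Conversely, an open cone around a point of this
half-axis covers `ℝ² \ {0}` together with one such sector. If `Vu` decayed rapidly on it, Fourier
inversion in `ξ` would give `u(x) → 0` at infinity, contradicting `|u| = 1`.

For a real polynomial `p` the phase condition comes from `∂_η Im p(y + iη) = Re p'(y + iη)`, which
is asymptotic to the leading term of `p'(y)`, uniformly for `0 ≤ η ≤ 1`. -/

open Complex Filter Set Topology Polynomial
open scoped FourierTransform Real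

section Cones

/-- Faster than polynomial decay of `STFT u` on a set. The weight is the one in `gaborWF`, so that
the condition on `Γ` there is definitionally `STFTRapidDecayOn u Γ`. -/
def STFTRapidDecayOn (u : ℝ → ℂ) (Γ : Set (ℝ × ℝ)) : Prop :=
  ∀ N : ℕ, ∃ M : ℝ, ∀ w ∈ Γ,
    (1 + w.1 ^ 2 + w.2 ^ 2) ^ ((N : ℝ) / 2) * ‖STFT u w.1 w.2‖ ≤ M

variable {u : ℝ → ℂ} {Γ Δ : Set (ℝ × ℝ)}

lemma STFTRapidDecayOn.mono (hΔ : STFTRapidDecayOn u Δ) (hΓΔ : Γ ⊆ Δ) :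
    STFTRapidDecayOn u Γ := fun N ↦
  (hΔ N).imp fun _ hM w hw ↦ hM w (hΓΔ hw)

lemma STFTRapidDecayOn.union (hΓ : STFTRapidDecayOn u Γ) (hΔ : STFTRapidDecayOn u Δ) :
    STFTRapidDecayOn u (Γ ∪ Δ) := by
  intro N
  obtain ⟨M, hM⟩ := hΓ N
  obtain ⟨M', hM'⟩ := hΔ N
  refine ⟨max M M', ?_⟩
  rintro w (hw | hw)
  · exact le_max_of_le_left (hM w hw)
  · exact le_max_of_le_right (hM' w hw)

lemma isOpenCone_setOf_snd_lt (c : ℝ) : IsOpenCone {w | w.2 < c * |w.1|} := by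
  refine ⟨isOpen_lt (by fun_prop) (by fun_prop), by simp, ?_⟩
  intro w hw r hr
  calc r * w.2 < r * (c * |w.1|) := mul_lt_mul_of_pos_left hw hr
    _ = c * |r * w.1| := by rw [abs_mul, abs_of_pos hr]; ring

lemma IsOpenCone.exists_forall_mul_abs_le (hΓ : IsOpenCone Γ) {ξ₀ : ℝ} (hξ₀ : 0 < ξ₀)
    (hmem : (0, ξ₀) ∈ Γ) : ∃ c > 0, ∀ w : ℝ × ℝ, 0 < w.2 → c * |w.1| ≤ w.2 → w ∈ Γ := by
  obtain ⟨hopen, -, hcone⟩ := hΓ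
  obtain ⟨ε, hε, hball⟩ := Metric.isOpen_iff.1 hopen _ hmem
  refine ⟨2 * ξ₀ / ε, by positivity, ?_⟩
  rintro ⟨x, ξ⟩ hξ hxξ
  simp only at hξ hxξ
  have hslice : (ξ₀ * x / ξ, ξ₀) ∈ Γ := by
    apply hball
    suffices |ξ₀ * x / ξ| < ε by
      rw [Metric.mem_ball, Prod.dist_eq, dist_self, Real.dist_0_eq_abs]
      exact max_lt this hε
    rw [abs_div, abs_mul, abs_of_pos hξ₀, abs_of_pos hξ, div_lt_iff₀ hξ]
    rw [div_mul_eq_mul_div, div_le_iff₀ hε] at hxξ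
    nlinarith
  convert hcone _ hslice (ξ / ξ₀) (by positivity) using 1
  ext <;> simp only [Prod.smul_mk, smul_eq_mul] <;> field_simp

lemma exists_snd_lt_mul_abs_fst {z : ℝ × ℝ} (hz : z ≠ 0) (haxis : ¬(z.1 = 0 ∧ 0 < z.2)) :
    ∃ c > 0, z.2 < c * |z.1| := by
  obtain ⟨x, ξ⟩ := z
  rcases eq_or_ne x 0 with rfl | hx
  · have hξ : ξ ≠ 0 := by simpa using hz
    have hξ' : ξ ≤ 0 := by simpa using haxis
    exact ⟨1, one_pos, by simpa using hξ'.lt_of_ne hξ⟩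
  · have hx' : 0 < |x| := abs_pos.2 hx
    refine ⟨(|ξ| + 1) / |x|, by positivity, ?_⟩
    rw [div_mul_cancel₀ _ hx'.ne']
    linarith [le_abs_self ξ]

lemma gaborWF_subset_of_rapidDecayOn
    (hu : ∀ c > 0, STFTRapidDecayOn u {w | w.2 < c * |w.1|}) :
    gaborWF u ⊆ {z | z.1 = 0 ∧ 0 < z.2} := by
  rintro z ⟨hz, hWF⟩
  by_contra haxis
  obtain ⟨c, hc, hlt⟩ := exists_snd_lt_mul_abs_fst hz haxis
  exact hWF ⟨_, isOpenCone_setOf_snd_lt c, hlt, hu c hc⟩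

lemma STFTRapidDecayOn.compl_zero_of_cone
    (hu : ∀ c > 0, STFTRapidDecayOn u {w | w.2 < c * |w.1|}) (hΓ : IsOpenCone Γ)
    (hdecay : STFTRapidDecayOn u Γ) {ξ₀ : ℝ} (hξ₀ : 0 < ξ₀) (hmem : (0, ξ₀) ∈ Γ) :
    STFTRapidDecayOn u {0}ᶜ := by
  obtain ⟨c, hc, hsector⟩ := hΓ.exists_forall_mul_abs_le hξ₀ hmem
  refine ((hu c hc).union hdecay).mono fun w hw ↦ ?_
  rcases lt_or_ge w.2 (c * |w.1|) with hlt | hge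
  · exact .inl hlt
  · refine .inr (hsector w ?_ hge)
    by_contra! hw₂
    have hw₁ : |w.1| = 0 := by nlinarith [abs_nonneg w.1]
    refine hw (Prod.ext (abs_eq_zero.1 hw₁) (le_antisymm hw₂ ?_))
    simpa [hw₁] using hge

end Cones

section Inversion

variable {u : ℝ → ℂ} {x : ℝ}

lemma STFT_eq_fourier (u : ℝ → ℂ) (x w : ℝ) :
    STFT u x (2 * π * w) = 𝓕 (fun y : ℝ ↦ u y * cexp (-((y - x) ^ 2 : ℝ))) w := by
  rw [Real.fourier_eq', STFT]
  congr 1 with y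
  have hphase : -I * y * (2 * π * w : ℝ) = (-2 * π * inner ℝ y w : ℝ) * I := by
    push_cast [RCLike.inner_apply, conj_trivial]
    ring
  rw [hphase, smul_eq_mul]
  ring

theorem STFT_inversion (hcont : ContinuousAt u x)
    (hint : Integrable fun y : ℝ ↦ u y * cexp (-((y - x) ^ 2 : ℝ)))
    (hSTFT : Integrable (STFT u x)) :
    u x = (2 * π)⁻¹ * ∫ ξ : ℝ, cexp (x * ξ * I) * STFT u x ξ := by
  set g : ℝ → ℂ := fun y ↦ u y * cexp (-((y - x) ^ 2 : ℝ)) with hg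
  have hfourier : 𝓕 g = fun w ↦ STFT u x (2 * π * w) :=
    funext fun w ↦ (STFT_eq_fourier u x w).symm
  have hfourier_int : Integrable (𝓕 g) := by
    rw [hfourier]
    exact hSTFT.comp_mul_left' (by positivity)
  have hgx : ContinuousAt g x := hcont.mul (by fun_prop)
  calc u x = g x := by simp [hg]
    _ = 𝓕⁻ (𝓕 g) x := (hint.fourierInv_fourier_eq hfourier_int hgx).symm
    _ = ∫ w : ℝ, cexp (x * (2 * π * w : ℝ) * I) * STFT u x (2 * π * w) := by
      rw [Real.fourierInv_eq', hfourier]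
      congr 1 with w
      rw [smul_eq_mul]
      congr 2
      push_cast [RCLike.inner_apply, conj_trivial]
      ring
    _ = (2 * π)⁻¹ * ∫ ξ : ℝ, cexp (x * ξ * I) * STFT u x ξ := by
      rw [Measure.integral_comp_mul_left (fun ξ : ℝ ↦ cexp (x * ξ * I) * STFT u x ξ),
        abs_of_pos (by positivity), real_smul]

lemma integrable_exp_neg_sub_sq (x : ℝ) : Integrable fun y : ℝ ↦ Real.exp (-(y - x) ^ 2) := by
  simpa using (integrable_exp_neg_mul_sq one_pos).comp_sub_right x

lemma integrable_mul_gaussian {C : ℝ} (hu : AEStronglyMeasurable u) (hC : ∀ y, ‖u y‖ ≤ C) (x : ℝ) :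
    Integrable fun y : ℝ ↦ u y * cexp (-((y - x) ^ 2 : ℝ)) := by
  refine Integrable.bdd_mul (c := C) ?_ hu (.of_forall hC)
  exact_mod_cast (integrable_exp_neg_sub_sq x).ofReal

lemma continuous_STFT (hint : Integrable fun y : ℝ ↦ u y * cexp (-((y - x) ^ 2 : ℝ))) :
    Continuous (STFT u x) := by
  have hfourier : Continuous (𝓕 fun y : ℝ ↦ u y * cexp (-((y - x) ^ 2 : ℝ))) :=
    VectorFourier.fourierIntegral_continuous Real.continuous_fourierChar continuous_inner hint
  have hSTFT : STFT u x =
      fun ξ ↦ 𝓕 (fun y : ℝ ↦ u y * cexp (-((y - x) ^ 2 : ℝ))) (ξ / (2 * π)) := by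
    ext ξ
    rw [← STFT_eq_fourier, mul_div_cancel₀ _ (by positivity)]
  rw [hSTFT]
  exact hfourier.comp (continuous_id.div_const _)

lemma norm_le_of_norm_STFT_le {B : ℝ} (hcont : ContinuousAt u x)
    (hint : Integrable fun y : ℝ ↦ u y * cexp (-((y - x) ^ 2 : ℝ)))
    (hB : ∀ ξ, ‖STFT u x ξ‖ ≤ B * (1 + ξ ^ 2)⁻¹) : ‖u x‖ ≤ B / 2 := by
  have hmajorant : Integrable fun ξ : ℝ ↦ B * (1 + ξ ^ 2)⁻¹ := integrable_inv_one_add_sq.const_mul B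
  have hSTFT : Integrable (STFT u x) :=
    hmajorant.mono' (continuous_STFT hint).aestronglyMeasurable (.of_forall hB)
  have hintegral : ‖∫ ξ : ℝ, cexp (x * ξ * I) * STFT u x ξ‖ ≤ B * π := by
    rw [← integral_univ_inv_one_add_sq, ← integral_const_mul]
    refine norm_integral_le_of_norm_le hmajorant (.of_forall fun ξ ↦ ?_)
    rw [norm_mul, ← ofReal_mul, norm_exp_ofReal_mul_I, one_mul]
    exact hB ξ
  calc ‖u x‖ = (2 * π)⁻¹ * ‖∫ ξ : ℝ, cexp (x * ξ * I) * STFT u x ξ‖ := by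
        rw [STFT_inversion hcont hint hSTFT, norm_mul]
        congr 1
        simp [abs_of_pos Real.pi_pos]
    _ ≤ (2 * π)⁻¹ * (B * π) := by gcongr
    _ = B / 2 := by field_simp

lemma tendsto_sq_cocompact_atTop : Tendsto (fun x : ℝ ↦ x ^ 2) (cocompact ℝ) atTop := by
  simpa only [Function.comp_def, Real.norm_eq_abs, sq_abs] using
    (tendsto_pow_atTop two_ne_zero).comp (tendsto_norm_cocompact_atTop (E := ℝ))

lemma STFTRapidDecayOn.tendsto_zero {C : ℝ} (hdecay : STFTRapidDecayOn u {0}ᶜ) (hu : Continuous u)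
    (hC : ∀ y, ‖u y‖ ≤ C) : Tendsto u (cocompact ℝ) (𝓝 0) := by
  obtain ⟨M, hM⟩ := hdecay 4
  have hweight (x ξ : ℝ) : (1 + x ^ 2) * (1 + ξ ^ 2) ≤ (1 + x ^ 2 + ξ ^ 2) ^ ((4 : ℕ) / 2 : ℝ) := by
    rw [show ((4 : ℕ) / 2 : ℝ) = (2 : ℕ) by norm_num, Real.rpow_natCast]
    nlinarith [sq_nonneg x, sq_nonneg ξ, mul_nonneg (sq_nonneg x) (sq_nonneg ξ)]
  have hSTFT {x : ℝ} (hx : x ≠ 0) (ξ : ℝ) :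
      ‖STFT u x ξ‖ ≤ M / (1 + x ^ 2) * (1 + ξ ^ 2)⁻¹ := by
    rw [← div_eq_mul_inv, div_div, le_div_iff₀' (by positivity)]
    calc _ ≤ (1 + x ^ 2 + ξ ^ 2) ^ ((4 : ℕ) / 2 : ℝ) * ‖STFT u x ξ‖ := by gcongr; exact hweight x ξ
      _ ≤ M := hM (x, ξ) (by simp [hx])
  have hbound : ∀ᶠ x in cocompact ℝ, ‖u x‖ ≤ M / (1 + x ^ 2) / 2 := by
    filter_upwards [isCompact_singleton (x := (0 : ℝ)).compl_mem_cocompact] with x hx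
    exact norm_le_of_norm_STFT_le hu.continuousAt
      (integrable_mul_gaussian hu.aestronglyMeasurable hC x) (hSTFT hx)
  have hmajorant : Tendsto (fun x : ℝ ↦ M / (1 + x ^ 2) / 2) (cocompact ℝ) (𝓝 0) := by
    have hsq : Tendsto (fun x : ℝ ↦ 1 + x ^ 2) (cocompact ℝ) atTop :=
      tendsto_atTop_add_const_left _ _ tendsto_sq_cocompact_atTop
    simpa using (hsq.const_div_atTop M).div_const 2
  exact squeeze_zero_norm' hbound hmajorant

end Inversion

section Decay

variable {u : ℝ → ℂ} {A δ : ℝ}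

lemma one_add_sq_add_sq_rpow_le (x ξ : ℝ) (N : ℕ) :
    (1 + x ^ 2 + ξ ^ 2) ^ ((N : ℝ) / 2) ≤ N.factorial * Real.exp (1 + |x| + |ξ|) := by
  have hsq : 1 + x ^ 2 + ξ ^ 2 ≤ (1 + |x| + |ξ|) ^ 2 := by
    rw [← sq_abs x, ← sq_abs ξ]
    nlinarith [abs_nonneg x, abs_nonneg ξ, mul_nonneg (abs_nonneg x) (abs_nonneg ξ)]
  calc (1 + x ^ 2 + ξ ^ 2) ^ ((N : ℝ) / 2)
      ≤ ((1 + |x| + |ξ|) ^ 2) ^ ((N : ℝ) / 2) := by gcongr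
    _ = (1 + |x| + |ξ|) ^ N := by
      rw [← Real.rpow_natCast_mul (by positivity), Nat.cast_ofNat, mul_div_cancel₀ _ two_ne_zero,
        Real.rpow_natCast]
    _ ≤ N.factorial * Real.exp (1 + |x| + |ξ|) := by
      rw [← div_le_iff₀' (by positivity)]
      exact Real.pow_div_factorial_le_exp _ (by positivity) N

lemma sub_mul_sq_le_of_lt_mul_abs (hδ : 0 < δ) {c x ξ : ℝ} (hc : 0 ≤ c) (hξ : ξ < c * |x|) :
    ξ - δ * x ^ 2 ≤ (2 * c + 1) ^ 2 / (4 * δ) - |x| - |ξ| := by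
  have habs : ξ + |ξ| ≤ 2 * c * |x| := by
    have : 0 ≤ c * |x| := by positivity
    rcases abs_cases ξ with ⟨h, -⟩ | ⟨h, -⟩ <;> rw [h] <;> linarith
  have hamgm : (2 * c + 1) * |x| ≤ (2 * c + 1) ^ 2 / (4 * δ) + δ * |x| ^ 2 := by
    have hsq : (2 * c + 1) ^ 2 / (4 * δ) + δ * |x| ^ 2 - (2 * c + 1) * |x|
        = (2 * c + 1 - 2 * δ * |x|) ^ 2 / (4 * δ) := by
      field_simp
      ring
    have : 0 ≤ (2 * c + 1 - 2 * δ * |x|) ^ 2 / (4 * δ) := by positivity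
    linarith
  rw [sq_abs] at hamgm
  linarith

lemma STFTRapidDecayOn.of_norm_le (hδ : 0 < δ)
    (h : ∀ x ξ, ‖STFT u x ξ‖ ≤ A * Real.exp (ξ - δ * x ^ 2)) {c : ℝ} (hc : 0 ≤ c) :
    STFTRapidDecayOn u {w | w.2 < c * |w.1|} := by
  have hA : 0 ≤ A := nonneg_of_mul_nonneg_left ((norm_nonneg _).trans (h 0 0)) (Real.exp_pos _)
  set K := (2 * c + 1) ^ 2 / (4 * δ)
  intro N
  refine ⟨N.factorial * A * Real.exp (1 + K), ?_⟩
  rintro ⟨x, ξ⟩ hw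
  have hexponent : ξ - δ * x ^ 2 ≤ K - |x| - |ξ| := sub_mul_sq_le_of_lt_mul_abs hδ hc hw
  calc (1 + x ^ 2 + ξ ^ 2) ^ ((N : ℝ) / 2) * ‖STFT u x ξ‖
      ≤ N.factorial * Real.exp (1 + |x| + |ξ|) * (A * Real.exp (K - |x| - |ξ|)) := by
        gcongr
        · exact one_add_sq_add_sq_rpow_le x ξ N
        · exact (h x ξ).trans (by gcongr A * Real.exp ?_)
    _ = N.factorial * A * (Real.exp (1 + |x| + |ξ|) * Real.exp (K - |x| - |ξ|)) := by ring
    _ = N.factorial * A * Real.exp (1 + K) := by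
        rw [← Real.exp_add]
        ring_nf

theorem gaborWF_eq_of_norm_STFT_le {C : ℝ} (hu : Continuous u) (hC : ∀ y, ‖u y‖ ≤ C)
    (hlim : ¬Tendsto u (cocompact ℝ) (𝓝 0)) (hδ : 0 < δ)
    (h : ∀ x ξ, ‖STFT u x ξ‖ ≤ A * Real.exp (ξ - δ * x ^ 2)) :
    gaborWF u = {z | z.1 = 0 ∧ 0 < z.2} := by
  have hdecay (c : ℝ) (hc : c > 0) : STFTRapidDecayOn u {w | w.2 < c * |w.1|} :=
    .of_norm_le hδ h hc.le
  refine (gaborWF_subset_of_rapidDecayOn hdecay).antisymm ?_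
  rintro ⟨_, ξ₀⟩ ⟨rfl, hξ₀⟩
  refine ⟨fun hz ↦ hξ₀.ne' (congrArg Prod.snd hz), ?_⟩
  rintro ⟨Γ, hΓ, hmem, hΓdecay⟩
  exact hlim ((STFTRapidDecayOn.compl_zero_of_cone hdecay hΓ hΓdecay hξ₀ hmem).tendsto_zero hu hC)

end Decay

section ContourShift

variable {E : Type*} [NormedAddCommGroup E] [NormedSpace ℂ E] {F : ℂ → E} {g : ℝ → ℝ} {b : ℝ}

lemma norm_intervalIntegral_sub_intervalIntegral_add_mul_I_le (hF : Differentiable ℂ F)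
    (hFg : ∀ y : ℝ, ∀ η ∈ uIcc 0 b, ‖F (y + η * I)‖ ≤ g y) (R : ℝ) :
    ‖(∫ y in -R..R, F y) - ∫ y in -R..R, F (y + b * I)‖ ≤ |b| * (g R + g (-R)) := by
  have hside (S : ℝ) : ‖∫ η in (0 : ℝ)..b, F (S + η * I)‖ ≤ g S * |b| := by
    simpa using intervalIntegral.norm_integral_le_of_norm_le_const
      (f := fun η : ℝ ↦ F (S + η * I)) fun η hη ↦ hFg S η (uIoc_subset_uIcc hη)
  have hrect := Complex.integral_boundary_rect_eq_zero_of_differentiableOn F (-R : ℝ) (R + b * I)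
    hF.differentiableOn
  simp only [ofReal_re, ofReal_im, add_re, add_im, mul_re, mul_im, I_re, I_im, mul_zero, mul_one,
    sub_zero, add_zero, zero_add, ofReal_zero, zero_mul] at hrect
  have hsides : (∫ y in -R..R, F y) - ∫ y in -R..R, F (y + b * I)
      = I • (∫ η in (0 : ℝ)..b, F ((-R : ℝ) + η * I)) - I • ∫ η in (0 : ℝ)..b, F (R + η * I) := by
    rw [← sub_eq_zero, ← hrect]
    abel
  rw [hsides]
  refine (norm_sub_le _ _).trans ?_
  rw [norm_smul, norm_smul, norm_I, one_mul, one_mul]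
  linarith [hside R, hside (-R)]

theorem integral_eq_integral_add_mul_I (hF : Differentiable ℂ F) (hg : Integrable g)
    (hg₀ : Tendsto g (cocompact ℝ) (𝓝 0))
    (hFg : ∀ y : ℝ, ∀ η ∈ uIcc 0 b, ‖F (y + η * I)‖ ≤ g y) :
    ∫ y : ℝ, F y = ∫ y : ℝ, F (y + b * I) := by
  have hint (η : ℝ) (hη : η ∈ uIcc 0 b) : Integrable fun y : ℝ ↦ F (y + η * I) :=
    hg.mono' (hF.continuous.comp (by fun_prop)).aestronglyMeasurable (.of_forall (hFg · η hη))
  have hint₀ : Integrable fun y : ℝ ↦ F y := by simpa using hint 0 left_mem_uIcc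
  have hlim := (intervalIntegral_tendsto_integral hint₀ tendsto_neg_atTop_atBot tendsto_id).sub
    (intervalIntegral_tendsto_integral (hint b right_mem_uIcc) tendsto_neg_atTop_atBot tendsto_id)
  have hsides : Tendsto (fun R ↦ |b| * (g R + g (-R))) atTop (𝓝 0) := by
    have hpos := hg₀.mono_left atTop_le_cocompact
    have hneg := (hg₀.mono_left atBot_le_cocompact).comp tendsto_neg_atTop_atBot
    simpa using (hpos.add hneg).const_mul |b|
  have hzero := squeeze_zero_norm
    (norm_intervalIntegral_sub_intervalIntegral_add_mul_I_le hF hFg) hsides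
  exact sub_eq_zero.1 (tendsto_nhds_unique hlim hzero)

end ContourShift

section EntirePhase

/-- The integrand of `STFT (fun y ↦ cexp (I * φ y)) x ξ`, continued to complex `z`. -/
noncomputable def stftIntegrand (φ : ℂ → ℂ) (x ξ : ℝ) (z : ℂ) : ℂ :=
  cexp (I * φ z - I * z * ξ - (z - x) ^ 2)

variable {φ : ℂ → ℂ} {δ K : ℝ}

lemma tendsto_exp_neg_sub_sq_cocompact (x : ℝ) :
    Tendsto (fun y : ℝ ↦ Real.exp (-(y - x) ^ 2)) (cocompact ℝ) (𝓝 0) :=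
  Real.tendsto_exp_neg_atTop_nhds_zero.comp <|
    tendsto_sq_cocompact_atTop.comp (Homeomorph.subRight x).isClosedEmbedding.tendsto_cocompact

lemma STFT_cexp_I_mul (φ : ℂ → ℂ) (x ξ : ℝ) :
    STFT (fun y ↦ cexp (I * φ y)) x ξ = ∫ y : ℝ, stftIntegrand φ x ξ y := by
  simp only [STFT, stftIntegrand, ← Complex.exp_add]
  congr! 3
  push_cast
  ring

lemma norm_stftIntegrand (φ : ℂ → ℂ) (x ξ y η : ℝ) :
    ‖stftIntegrand φ x ξ (y + η * I)‖
      = Real.exp (-(φ (y + η * I)).im + η * ξ - (y - x) ^ 2 + η ^ 2) := by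
  rw [stftIntegrand, Complex.norm_exp]
  congr 1
  simp [pow_two]
  ring

lemma norm_stftIntegrand_le (hδ : 0 ≤ δ) (x ξ : ℝ) {y η : ℝ} (hη : η ∈ Icc 0 1)
    (hφ : η * (δ * y ^ 2 - K) ≤ (φ (y + η * I)).im) :
    ‖stftIntegrand φ x ξ (y + η * I)‖ ≤ Real.exp (|K| + |ξ| + 1) * Real.exp (-(y - x) ^ 2) := by
  obtain ⟨hη₀, hη₁⟩ := hη
  have hunit (t : ℝ) : η * t ≤ |t| :=
    (mul_le_mul_of_nonneg_left (le_abs_self t) hη₀).trans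
      (mul_le_of_le_one_left (abs_nonneg t) hη₁)
  have hy : 0 ≤ η * (δ * y ^ 2) := by positivity
  rw [norm_stftIntegrand, ← Real.exp_add]
  refine Real.exp_le_exp.2 ?_
  linarith [hunit K, hunit ξ, pow_le_one₀ (n := 2) hη₀ hη₁]

lemma mul_sq_add_sub_sq_eq (hδ : 1 + δ ≠ 0) (x y : ℝ) :
    δ * y ^ 2 + (y - x) ^ 2 = (1 + δ) * (y - x / (1 + δ)) ^ 2 + δ / (1 + δ) * x ^ 2 := by
  field_simp
  ring

lemma norm_integral_stftIntegrand_add_I_le (hδ : 0 ≤ δ)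
    (hφ : ∀ y : ℝ, δ * y ^ 2 - K ≤ (φ (y + I)).im) (x ξ : ℝ) :
    ‖∫ y : ℝ, stftIntegrand φ x ξ (y + I)‖
      ≤ Real.exp (K + 1) * (∫ y : ℝ, Real.exp (-(1 + δ) * y ^ 2))
        * Real.exp (ξ - δ / (1 + δ) * x ^ 2) := by
  set L := Real.exp (K + 1 + (ξ - δ / (1 + δ) * x ^ 2))
  have hgauss : Integrable fun y : ℝ ↦ Real.exp (-(1 + δ) * (y - x / (1 + δ)) ^ 2) :=
    (integrable_exp_neg_mul_sq (by positivity)).comp_sub_right (x / (1 + δ))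
  have hpointwise (y : ℝ) : ‖stftIntegrand φ x ξ (y + I)‖
      ≤ L * Real.exp (-(1 + δ) * (y - x / (1 + δ)) ^ 2) := by
    have hnorm := norm_stftIntegrand φ x ξ y 1
    simp only [ofReal_one, one_mul] at hnorm
    rw [hnorm, ← Real.exp_add]
    refine Real.exp_le_exp.2 ?_
    linarith [hφ y, mul_sq_add_sub_sq_eq (by positivity : 1 + δ ≠ 0) x y]
  calc _ ≤ ∫ y : ℝ, L * Real.exp (-(1 + δ) * (y - x / (1 + δ)) ^ 2) :=
        norm_integral_le_of_norm_le (hgauss.const_mul L) (.of_forall hpointwise)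
    _ = L * ∫ y : ℝ, Real.exp (-(1 + δ) * y ^ 2) := by
        rw [integral_const_mul,
          integral_sub_right_eq_self (fun y : ℝ ↦ Real.exp (-(1 + δ) * y ^ 2))]
    _ = _ := by
        rw [show L = Real.exp (K + 1) * Real.exp (ξ - δ / (1 + δ) * x ^ 2) from Real.exp_add _ _]
        ring

lemma exists_norm_STFT_cexp_I_mul_le (hφ : Differentiable ℂ φ) (hδ : 0 ≤ δ)
    (hstrip : ∀ y : ℝ, ∀ η ∈ Icc (0 : ℝ) 1, η * (δ * y ^ 2 - K) ≤ (φ (y + η * I)).im) :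
    ∃ A, ∀ x ξ, ‖STFT (fun y ↦ cexp (I * φ y)) x ξ‖ ≤ A * Real.exp (ξ - δ / (1 + δ) * x ^ 2) := by
  refine ⟨Real.exp (K + 1) * ∫ y : ℝ, Real.exp (-(1 + δ) * y ^ 2), fun x ξ ↦ ?_⟩
  have hshift : ∫ y : ℝ, stftIntegrand φ x ξ y = ∫ y : ℝ, stftIntegrand φ x ξ (y + I) := by
    have hzero : Tendsto (fun y ↦ Real.exp (|K| + |ξ| + 1) * Real.exp (-(y - x) ^ 2))
        (cocompact ℝ) (𝓝 0) := by
      simpa using (tendsto_exp_neg_sub_sq_cocompact x).const_mul _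
    have hdiff : Differentiable ℂ (stftIntegrand φ x ξ) := by
      unfold stftIntegrand
      fun_prop
    simpa using integral_eq_integral_add_mul_I (b := 1) hdiff
      ((integrable_exp_neg_sub_sq x).const_mul _) hzero fun y η hη ↦
        norm_stftIntegrand_le hδ x ξ (by simpa using hη) (hstrip y η (by simpa using hη))
  rw [STFT_cexp_I_mul, hshift]
  exact norm_integral_stftIntegrand_add_I_le hδ
    (fun y ↦ by simpa using hstrip y 1 (right_mem_Icc.2 zero_le_one)) x ξ

theorem gaborWF_cexp_I_mul (hφ : Differentiable ℂ φ) (hreal : ∀ y : ℝ, (φ y).im = 0) (hδ : 0 < δ)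
    (hstrip : ∀ y : ℝ, ∀ η ∈ Icc (0 : ℝ) 1, η * (δ * y ^ 2 - K) ≤ (φ (y + η * I)).im) :
    gaborWF (fun y ↦ cexp (I * φ y)) = {z | z.1 = 0 ∧ 0 < z.2} := by
  have hnorm (y : ℝ) : ‖cexp (I * φ y)‖ = 1 := by simp [Complex.norm_exp, hreal]
  have hlim : ¬Tendsto (fun y : ℝ ↦ cexp (I * φ y)) (cocompact ℝ) (𝓝 0) := fun h ↦ by
    simpa [hnorm] using h.norm
  obtain ⟨A, hA⟩ := exists_norm_STFT_cexp_I_mul_le hφ hδ.le hstrip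
  have hcont : Continuous fun y : ℝ ↦ cexp (I * φ y) := by
    have := hφ.continuous
    fun_prop
  exact gaborWF_eq_of_norm_STFT_le hcont (fun y ↦ (hnorm y).le) hlim (by positivity) hA

end EntirePhase

section PolynomialPhase

variable {s : Set ℝ}

lemma mul_le_im_sub_im_of_le_re_deriv {f : ℂ → ℂ} (hf : Differentiable ℂ f) {m y η : ℝ}
    (hη : 0 ≤ η) (hm : ∀ t ∈ Icc 0 η, m ≤ (deriv f (y + t * I)).re) :
    η * m ≤ (f (y + η * I)).im - (f y).im := by
  have hderiv (t : ℝ) : HasDerivAt (fun t : ℝ ↦ (f (y + t * I)).im) (deriv f (y + t * I)).re t := by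
    have hline : HasDerivAt (fun t : ℝ ↦ (y + t * I : ℂ)) I t := by
      simpa using ((hasDerivAt_id t).ofReal_comp.mul_const I).const_add (y : ℂ)
    simpa using! imCLM.hasFDerivAt.comp_hasDerivAt t ((hf _).hasDerivAt.comp t hline)
  have hmono := (convex_Icc 0 η).mul_sub_le_image_sub_of_le_deriv (C := m)
    (fun t _ ↦ (hderiv t).continuousAt.continuousWithinAt)
    (fun t _ ↦ (hderiv t).differentiableAt.differentiableWithinAt)
    (fun t ht ↦ by rw [(hderiv t).deriv]; exact hm t (interior_subset ht))
    0 (left_mem_Icc.2 hη) η (right_mem_Icc.2 hη) hη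
  simpa [mul_comm] using hmono

lemma tendsto_eval_div_pow_cobounded {𝕜 : Type*} [NormedField 𝕜] (q : 𝕜[X]) :
    Tendsto (fun z ↦ q.eval z / z ^ q.natDegree) (Bornology.cobounded 𝕜) (𝓝 q.leadingCoeff) := by
  have hreverse : Tendsto (fun z ↦ q.reverse.eval z⁻¹) (Bornology.cobounded 𝕜)
      (𝓝 q.leadingCoeff) := by
    rw [← coeff_zero_reverse, coeff_zero_eq_eval_zero]
    exact (q.reverse.continuous.tendsto 0).comp tendsto_inv₀_cobounded
  refine hreverse.congr' ?_
  filter_upwards [Bornology.eventually_ne_cobounded 0] with z hz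
  let _ := invertibleOfNonzero hz
  rw [eq_div_iff (pow_ne_zero _ hz)]
  simpa using eval₂_reverse_mul_pow (RingHom.id 𝕜) z q

lemma tendsto_add_mul_I_cobounded (s : Set ℝ) :
    Tendsto (fun w : ℝ × ℝ ↦ (w.1 + w.2 * I : ℂ)) (cocompact ℝ ×ˢ 𝓟 s)
      (Bornology.cobounded ℂ) := by
  rw [← tendsto_norm_atTop_iff_cobounded]
  refine tendsto_atTop_mono (fun w ↦ ?_) ((tendsto_norm_cocompact_atTop (E := ℝ)).comp tendsto_fst)
  simpa using abs_re_le_norm (w.1 + w.2 * I)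

lemma tendsto_add_mul_I_div_ofReal (hs : Bornology.IsBounded s) :
    Tendsto (fun w : ℝ × ℝ ↦ (w.1 + w.2 * I : ℂ) / w.1) (cocompact ℝ ×ˢ 𝓟 s) (𝓝 1) := by
  obtain ⟨C, hC⟩ := hs.exists_norm_le
  have hinv : Tendsto (fun w : ℝ × ℝ ↦ w.1⁻¹) (cocompact ℝ ×ˢ 𝓟 s) (𝓝 0) := by
    rw [← Metric.cobounded_eq_cocompact]
    exact tendsto_inv₀_cobounded.comp tendsto_fst
  have hratio : Tendsto (fun w : ℝ × ℝ ↦ w.2 * w.1⁻¹) (cocompact ℝ ×ˢ 𝓟 s) (𝓝 0) :=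
    bdd_le_mul_tendsto_zero' C (tendsto_snd.eventually (mem_principal.2 hC)) hinv
  have hlim : Tendsto (fun w : ℝ × ℝ ↦ 1 + ((w.2 * w.1⁻¹ : ℝ) : ℂ) * I) (cocompact ℝ ×ˢ 𝓟 s)
      (𝓝 1) := by
    simpa using (hratio.ofReal.mul_const I).const_add 1
  refine hlim.congr' ?_
  filter_upwards [tendsto_fst.eventually (isCompact_singleton (x := (0 : ℝ)).compl_mem_cocompact)]
    with w hw
  have hw' : (w.1 : ℂ) ≠ 0 := ofReal_ne_zero.2 hw
  push_cast
  field_simp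

lemma tendsto_aeval_add_mul_I_div_pow (q : ℝ[X]) (hs : Bornology.IsBounded s) :
    Tendsto (fun w : ℝ × ℝ ↦ aeval (w.1 + w.2 * I : ℂ) q / (w.1 : ℂ) ^ q.natDegree)
      (cocompact ℝ ×ˢ 𝓟 s) (𝓝 q.leadingCoeff) := by
  have hquot := (tendsto_eval_div_pow_cobounded (q.map ofRealHom)).comp
    (tendsto_add_mul_I_cobounded s)
  have hlim := hquot.mul ((tendsto_add_mul_I_div_ofReal hs).pow q.natDegree)
  rw [natDegree_map, leadingCoeff_map, one_pow, mul_one] at hlim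
  refine hlim.congr' ?_
  filter_upwards [(tendsto_add_mul_I_cobounded s).eventually (Bornology.eventually_ne_cobounded 0)]
    with w hw
  rw [Function.comp_apply, div_pow, div_mul_div_cancel₀ (pow_ne_zero _ hw), eval_map]
  rfl

lemma eventually_mul_sq_le_re_aeval {q : ℝ[X]} (heven : Even q.natDegree) (hdeg : q.natDegree ≠ 0)
    (hlead : 0 < q.leadingCoeff) (hs : Bornology.IsBounded s) :
    ∀ᶠ w : ℝ × ℝ in cocompact ℝ ×ˢ 𝓟 s,
      q.leadingCoeff / 2 * w.1 ^ 2 ≤ (aeval (w.1 + w.2 * I : ℂ) q).re := by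
  have hlim := (continuous_re.tendsto _).comp (tendsto_aeval_add_mul_I_div_pow q hs)
  have hone := (tendsto_norm_cocompact_atTop (E := ℝ)).eventually_ge_atTop 1
  filter_upwards [hlim.eventually_const_le (half_lt_self hlead), tendsto_fst.eventually hone]
    with ⟨y, η⟩ hre hy
  have hpow : y ^ 2 ≤ y ^ q.natDegree := by
    rw [← heven.pow_abs, ← sq_abs]
    exact pow_le_pow_right₀ hy (Nat.le_of_dvd (Nat.pos_of_ne_zero hdeg) heven.two_dvd)
  have hpos : 0 < y ^ q.natDegree := heven.pow_pos (norm_pos_iff.1 (one_pos.trans_le hy))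
  rw [Function.comp_apply, ← ofReal_pow, div_ofReal_re, le_div_iff₀ hpos] at hre
  exact (by gcongr : _ ≤ _).trans hre

lemma exists_mul_sq_sub_le_re_aeval {q : ℝ[X]} (heven : Even q.natDegree) (hdeg : q.natDegree ≠ 0)
    (hlead : 0 < q.leadingCoeff) (hs : IsCompact s) :
    ∃ δ > 0, ∃ K, ∀ y : ℝ, ∀ η ∈ s, δ * y ^ 2 - K ≤ (aeval (y + η * I : ℂ) q).re := by
  set δ := q.leadingCoeff / 2
  have hlarge := eventually_mul_sq_le_re_aeval heven hdeg hlead hs.isBounded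
  obtain ⟨t, ht, hcompl⟩ := mem_cocompact.1 (eventually_prod_principal_iff.1 hlarge)
  have hcont : Continuous fun w : ℝ × ℝ ↦ (aeval (w.1 + w.2 * I : ℂ) q).re - δ * w.1 ^ 2 := by
    have := q.continuous_aeval (A := ℂ)
    fun_prop
  obtain ⟨m, hm⟩ := (ht.prod hs).bddBelow_image hcont.continuousOn
  refine ⟨δ, half_pos hlead, max (-m) 0, fun y η hη ↦ ?_⟩
  by_cases hy : y ∈ t
  · have : m ≤ (aeval (y + η * I : ℂ) q).re - δ * y ^ 2 := hm ⟨(y, η), ⟨hy, hη⟩, rfl⟩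
    linarith [le_max_left (-m) 0]
  · have : δ * y ^ 2 ≤ (aeval (y + η * I : ℂ) q).re := hcompl hy η hη
    linarith [le_max_right (-m) 0]

lemma exists_mul_le_im_aeval {p : ℝ[X]} (hodd : Odd p.natDegree) (hdeg : 1 < p.natDegree)
    (hlead : 0 < p.leadingCoeff) :
    ∃ δ > 0, ∃ K, ∀ y : ℝ, ∀ η ∈ Icc (0 : ℝ) 1,
      η * (δ * y ^ 2 - K) ≤ (aeval (y + η * I : ℂ) p).im := by
  have heven : Even p.derivative.natDegree := by
    rw [natDegree_derivative]
    exact Nat.Odd.sub_odd hodd odd_one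
  have hdeg' : p.derivative.natDegree ≠ 0 := by
    rw [natDegree_derivative]
    exact Nat.sub_ne_zero_of_lt hdeg
  have hlead' : 0 < p.derivative.leadingCoeff := by
    rw [leadingCoeff_derivative]
    positivity
  obtain ⟨δ, hδ, K, hK⟩ := exists_mul_sq_sub_le_re_aeval heven hdeg' hlead' isCompact_Icc
  refine ⟨δ, hδ, K, fun y η ⟨hη₀, hη₁⟩ ↦ ?_⟩
  have hreal : (aeval (y : ℂ) p).im = 0 := by
    rw [← coe_algebraMap, aeval_algebraMap_apply, coe_algebraMap, ofReal_im]
  have hmono := mul_le_im_sub_im_of_le_re_deriv p.differentiable_aeval hη₀ (y := y) fun t ht ↦ by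
    rw [Polynomial.deriv_aeval]
    exact hK y t ⟨ht.1, ht.2.trans hη₁⟩
  rwa [hreal, sub_zero] at hmono

theorem stmt_15_general {p : ℝ[X]} (hodd : Odd p.natDegree) (hdeg : 1 < p.natDegree)
    (hlead : 0 < p.leadingCoeff) :
    gaborWF (fun y ↦ cexp (I * (p.eval y : ℝ))) = {z | z.1 = 0 ∧ 0 < z.2} := by
  obtain ⟨δ, hδ, K, hstrip⟩ := exists_mul_le_im_aeval hodd hdeg hlead
  have heval (y : ℝ) : ((p.eval y : ℝ) : ℂ) = aeval (y : ℂ) p :=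
    (aeval_algebraMap_apply ℂ y p).symm
  simp only [heval]
  exact gaborWF_cexp_I_mul (φ := (aeval · p)) p.differentiable_aeval
    (fun y ↦ by rw [← heval, ofReal_im]) hδ hstrip

end PolynomialPhase

/-- Proposition `WFairy`.  For `k ≥ 1`, the Gabor wave front set of
`u(y) = exp(i y^{2k+1})` is the positive frequency half-axis `{0} × ℝ₊`. -/
theorem stmt_15 (k : ℕ) (hk : 1 ≤ k) :
    gaborWF (fun y : ℝ => Complex.exp (Complex.I * (y : ℂ) ^ (2 * k + 1)))
      = {z : ℝ × ℝ | z.1 = 0 ∧ 0 < z.2} := by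
  simpa using stmt_15_general (p := X ^ (2 * k + 1)) (by simp)
    (by rw [natDegree_X_pow]; omega) (by simp)

end Stmt15
end

section
/- Let H : ℝ → ℝ be the Heaviside function, H(y) = 1 for y ≥ 0 and H(y) = 0 for y < 0. Then the Gabor wave front set of H equals WF(H) = ( {0} × (ℝ \ {0}) ) ∪ ( { x ∈ ℝ : x > 0 } × {0} ) ⊆ ℝ² \ {0}. -/
/-!
Write `V` for the transform of `H` and split the Gaussian integral over `ℝ` at the jump. The
half-line on which `(y - x)² ≥ y² + x²` contributes at most `√π e^{-x²}`, while the full integral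
has modulus `√π e^{-ξ²/4}`. So `V` decays like a Gaussian for `x < 0`, and for `x > 0` as soon as
`ξ` is comparable to `x`; at `ξ = 0` and `x → ∞` one has instead `|V(x, 0)| → √π`. On the line
`x = 0` one integration by parts and the Riemann–Lebesgue lemma give `iξ V(0, ξ) → H(0+) = 1`, so
`V` decays there only like `1 / |ξ|`.
-/

open MeasureTheory

namespace Stmt16

/-- Gaussian-window short-time Fourier transform of `u : ℝ → ℂ`:
`Vu(x,ξ) = ∫ u(y) e^{−iyξ} e^{−(y−x)²} dy`. -/
noncomputable def STFT (u : ℝ → ℂ) (x ξ : ℝ) : ℂ :=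
  ∫ y : ℝ, u y * Complex.exp (-(Complex.I) * (y : ℂ) * (ξ : ℂ))
    * Complex.exp (-(((y - x) ^ 2 : ℝ) : ℂ))

/-- An open cone in `ℝ² \ {0}`. -/
def IsOpenCone (Γ : Set (ℝ × ℝ)) : Prop :=
  IsOpen Γ ∧ (0 : ℝ × ℝ) ∉ Γ ∧ ∀ z ∈ Γ, ∀ r : ℝ, 0 < r → r • z ∈ Γ

/-- The Gabor wave front set of `u : ℝ → ℂ`: the set of `z₀ ∈ ℝ² \ {0}` such that there is
no open cone containing `z₀` on which `Vu` decays faster than any power. -/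
def gaborWF (u : ℝ → ℂ) : Set (ℝ × ℝ) :=
  {z | z ≠ 0 ∧ ¬ ∃ Γ : Set (ℝ × ℝ), IsOpenCone Γ ∧ z ∈ Γ ∧
    ∀ N : ℕ, ∃ M : ℝ, ∀ w ∈ Γ,
      (1 + w.1 ^ 2 + w.2 ^ 2) ^ ((N : ℝ) / 2) * ‖STFT u w.1 w.2‖ ≤ M}

open Filter Topology Complex

section OscillatoryIntegral

variable {E : Type*} [NormedAddCommGroup E] [NormedSpace ℂ E]

lemma norm_exp_neg_I_mul_ofReal_mul_ofReal (y ξ : ℝ) : ‖exp (-I * y * ξ)‖ = 1 := by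
  simp [norm_exp]

lemma integrable_exp_smul {μ : Measure ℝ} {f : ℝ → E} (hf : Integrable f μ) (ξ : ℝ) :
    Integrable (fun y : ℝ ↦ exp (-I * y * ξ) • f y) μ :=
  hf.bdd_smul (φ := fun y : ℝ ↦ exp (-I * y * ξ)) 1
    (Continuous.aestronglyMeasurable (by fun_prop))
    (.of_forall fun y ↦ (norm_exp_neg_I_mul_ofReal_mul_ofReal y ξ).le)

theorem tendsto_setIntegral_exp_smul_cocompact {s : Set ℝ} (hs : MeasurableSet s) (f : ℝ → E) :
    Tendsto (fun ξ : ℝ ↦ ∫ y in s, exp (-I * y * ξ) • f y) (cocompact ℝ) (𝓝 0) := by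
  have rescale : Tendsto (fun ξ : ℝ ↦ ξ * (2 * Real.pi)⁻¹) (cocompact ℝ) (cocompact ℝ) :=
    (Homeomorph.mulRight₀ _ (by positivity)).isClosedEmbedding.tendsto_cocompact
  refine ((Real.tendsto_integral_exp_smul_cocompact (s.indicator f)).comp rescale).congr fun ξ ↦ ?_
  rw [Function.comp_apply, ← integral_indicator hs]
  refine integral_congr_ae (.of_forall fun y ↦ ?_)
  dsimp only
  rw [Set.indicator_smul_apply (r := fun y : ℝ ↦ exp (-I * y * ξ)), Circle.smul_def,
    Real.fourierChar_apply]
  congr 2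
  push_cast
  field_simp

variable [CompleteSpace E] {f f' : ℝ → E} {a : ℝ}

theorem smul_integral_Ioi_exp_smul_eq (hcont : ContinuousWithinAt f (Set.Ici a) a)
    (hderiv : ∀ y ∈ Set.Ioi a, HasDerivAt f (f' y) y) (hf : IntegrableOn f (Set.Ioi a))
    (hf' : IntegrableOn f' (Set.Ioi a)) (ξ : ℝ) :
    (I * ξ) • ∫ y in Set.Ioi a, exp (-I * y * ξ) • f y =
      exp (-I * a * ξ) • f a + ∫ y in Set.Ioi a, exp (-I * y * ξ) • f' y := by
  have hasDerivAt_exp (y : ℝ) :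
      HasDerivAt (fun y : ℝ ↦ exp (-I * y * ξ)) (-(I * ξ) * exp (-I * y * ξ)) y := by
    convert! ((ofRealCLM.hasDerivAt (x := y)).const_mul (-I)).mul_const (ξ : ℂ) |>.cexp using 1
    simp only [ofRealCLM_apply, ofReal_one]
    ring
  have hderiv_prod (y : ℝ) (hy : y ∈ Set.Ioi a) :
      HasDerivAt (fun y : ℝ ↦ exp (-I * y * ξ) • f y)
        (exp (-I * y * ξ) • f' y - (I * ξ) • exp (-I * y * ξ) • f y) y := by
    convert! (hasDerivAt_exp y).smul (hderiv y hy) using 1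
    simp only [smul_smul, neg_mul, neg_smul, sub_eq_add_neg]
  have hint_prod : IntegrableOn
      (fun y : ℝ ↦ exp (-I * y * ξ) • f' y - (I * ξ) • exp (-I * y * ξ) • f y) (Set.Ioi a) :=
    (integrable_exp_smul hf' ξ).sub ((integrable_exp_smul hf ξ).smul (I * (ξ : ℂ)))
  have hlim := tendsto_zero_of_hasDerivAt_of_integrableOn_Ioi hderiv_prod hint_prod
    (integrable_exp_smul hf ξ)
  have hftc := integral_Ioi_of_hasDerivAt_of_tendsto
    (ContinuousWithinAt.smul (by fun_prop) hcont) hderiv_prod hint_prod hlim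
  rw [integral_sub (integrable_exp_smul hf' ξ) ((integrable_exp_smul hf ξ).fun_smul _),
    integral_smul, zero_sub] at hftc
  rw [← sub_eq_iff_eq_add, ← neg_sub, hftc, neg_neg, Pi.smul_apply']

theorem tendsto_smul_integral_Ioi_exp_smul_cocompact (hcont : ContinuousWithinAt f (Set.Ici a) a)
    (hderiv : ∀ y ∈ Set.Ioi a, HasDerivAt f (f' y) y) (hf : IntegrableOn f (Set.Ioi a))
    (hf' : IntegrableOn f' (Set.Ioi a)) :
    Tendsto (fun ξ : ℝ ↦ exp (I * a * ξ) • (I * ξ) • ∫ y in Set.Ioi a, exp (-I * y * ξ) • f y)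
      (cocompact ℝ) (𝓝 (f a)) := by
  have hremainder : Tendsto
      (fun ξ : ℝ ↦ exp (I * a * ξ) • ∫ y in Set.Ioi a, exp (-I * y * ξ) • f' y)
      (cocompact ℝ) (𝓝 0) := by
    refine squeeze_zero_norm (fun ξ ↦ ?_) (tendsto_zero_iff_norm_tendsto_zero.mp
      (tendsto_setIntegral_exp_smul_cocompact (measurableSet_Ioi (a := a)) f'))
    simp [norm_smul, norm_exp]
  have hexp (ξ : ℝ) : exp (I * a * ξ) * exp (-I * a * ξ) = 1 := by
    rw [← Complex.exp_add, neg_mul, neg_mul, add_neg_cancel, Complex.exp_zero]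
  simp_rw [smul_integral_Ioi_exp_smul_eq hcont hderiv hf hf', smul_add, smul_smul, hexp, one_smul]
  simpa using hremainder.const_add (f a)

end OscillatoryIntegral

section ShortTimeFourierTransform

/-- The time-frequency shift of the Gaussian against which `u` is integrated in `STFT u x ξ`. -/
noncomputable def gaborAtom (x ξ y : ℝ) : ℂ :=
  exp (-I * y * ξ) * exp (-(((y - x) ^ 2 : ℝ) : ℂ))

lemma STFT_eq_integral_mul_gaborAtom (u : ℝ → ℂ) (x ξ : ℝ) :
    STFT u x ξ = ∫ y, u y * gaborAtom x ξ y := by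
  simp only [STFT, gaborAtom, mul_assoc]

lemma norm_gaborAtom (x ξ y : ℝ) : ‖gaborAtom x ξ y‖ = Real.exp (-(y - x) ^ 2) := by
  rw [gaborAtom, norm_mul, norm_exp_neg_I_mul_ofReal_mul_ofReal, one_mul, ← ofReal_neg,
    norm_exp_ofReal]

lemma integrable_exp_neg_sub_sq (x : ℝ) : Integrable fun y : ℝ ↦ Real.exp (-(y - x) ^ 2) := by
  simpa using (integrable_exp_neg_mul_sq one_pos).comp_sub_right x

lemma integrable_gaborAtom (x ξ : ℝ) : Integrable (gaborAtom x ξ) := by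
  refine (integrable_exp_neg_sub_sq x).mono' ?_ (.of_forall fun y ↦ (norm_gaborAtom x ξ y).le)
  exact Continuous.aestronglyMeasurable (by unfold gaborAtom; fun_prop)

theorem STFT_sub {u v : ℝ → ℂ} {A B : ℝ} (hu : AEStronglyMeasurable u) (huA : ∀ y, ‖u y‖ ≤ A)
    (hv : AEStronglyMeasurable v) (hvB : ∀ y, ‖v y‖ ≤ B) (x ξ : ℝ) :
    STFT (u - v) x ξ = STFT u x ξ - STFT v x ξ := by
  simp only [STFT_eq_integral_mul_gaborAtom, Pi.sub_apply, sub_mul]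
  exact integral_sub ((integrable_gaborAtom x ξ).bdd_mul hu (.of_forall huA))
    ((integrable_gaborAtom x ξ).bdd_mul hv (.of_forall hvB))

theorem STFT_one (x ξ : ℝ) :
    STFT 1 x ξ = (√Real.pi * Real.exp (-ξ ^ 2 / 4) : ℝ) * exp (-I * x * ξ) := by
  have shift (y : ℝ) : gaborAtom x ξ (y + x) =
      exp (-I * x * ξ) * (exp (I * (-ξ : ℝ) * y) * exp (-1 * (y : ℂ) ^ 2)) := by
    simp only [gaborAtom, add_sub_cancel_right, ← Complex.exp_add]
    push_cast
    ring_nf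
  simp only [STFT_eq_integral_mul_gaborAtom, Pi.one_apply, one_mul]
  rw [← integral_add_right_eq_self _ x]
  simp only [shift]
  rw [integral_const_mul, fourierIntegral_gaussian (by simp), mul_comm, Real.sqrt_eq_rpow]
  push_cast [ofReal_cpow Real.pi_pos.le]
  simp

theorem norm_STFT_one (x ξ : ℝ) : ‖STFT 1 x ξ‖ = √Real.pi * Real.exp (-ξ ^ 2 / 4) := by
  rw [STFT_one, norm_mul, norm_exp_neg_I_mul_ofReal_mul_ofReal, mul_one, norm_real,
    Real.norm_of_nonneg (by positivity)]

theorem norm_STFT_le_of_eq_zero_of_mul_pos {u : ℝ → ℂ} {B x : ℝ} (hu : ∀ y, ‖u y‖ ≤ B)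
    (hux : ∀ y, 0 < y * x → u y = 0) (ξ : ℝ) :
    ‖STFT u x ξ‖ ≤ B * √Real.pi * Real.exp (-x ^ 2) := by
  have hB : 0 ≤ B := (norm_nonneg _).trans (hu 0)
  have hpointwise (y : ℝ) :
      ‖u y * gaborAtom x ξ y‖ ≤ B * Real.exp (-x ^ 2) * Real.exp (-1 * y ^ 2) := by
    rcases lt_or_ge 0 (y * x) with hyx | hyx
    · rw [hux y hyx, zero_mul, norm_zero]
      positivity
    · rw [norm_mul, norm_gaborAtom, mul_assoc, ← Real.exp_add]
      gcongr
      · exact hu y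
      · linarith [sub_sq y x]
  calc ‖STFT u x ξ‖ = ‖∫ y, u y * gaborAtom x ξ y‖ := by rw [STFT_eq_integral_mul_gaborAtom]
    _ ≤ ∫ y, B * Real.exp (-x ^ 2) * Real.exp (-1 * y ^ 2) :=
      norm_integral_le_of_norm_le ((integrable_exp_neg_mul_sq one_pos).const_mul _)
        (.of_forall hpointwise)
    _ = B * √Real.pi * Real.exp (-x ^ 2) := by
      rw [integral_const_mul, integral_gaussian, div_one, mul_right_comm]

end ShortTimeFourierTransform

section WaveFrontSet

variable {u : ℝ → ℂ} {z : ℝ × ℝ}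

lemma rpow_one_add_mul_exp_neg_le {c s t : ℝ} (hc : 0 < c) (hs : 0 ≤ s) (ht : 0 ≤ t) :
    (1 + t) ^ s * Real.exp (-(c * t)) ≤ (s / c) ^ s * Real.exp c := by
  have hpow := ProbabilityTheory.rpow_abs_le_mul_exp_abs (1 + t) hs hc.ne'
  rw [abs_of_pos hc, abs_of_nonneg (by positivity)] at hpow
  calc (1 + t) ^ s * Real.exp (-(c * t))
      ≤ (s / c) ^ s * Real.exp (c * (1 + t)) * Real.exp (-(c * t)) := by gcongr
    _ = (s / c) ^ s * Real.exp c := by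
      rw [mul_assoc, ← Real.exp_add]
      ring_nf

theorem notMem_gaborWF_of_norm_STFT_le {U : Set (ℝ × ℝ)} (hU : IsOpenCone U) (hzU : z ∈ U)
    {q : ℝ × ℝ → ℝ} (hq : Continuous q) (hq_smul : ∀ r > 0, ∀ w, q (r • w) = r ^ 2 * q w)
    (hqz : 0 < q z) {C : ℝ}
    (hbound : ∀ w ∈ U, ‖STFT u w.1 w.2‖ ≤ C * Real.exp (-q w)) : z ∉ gaborWF u := by
  obtain ⟨c, hc, hcz⟩ : ∃ c > 0, c * (z.1 ^ 2 + z.2 ^ 2) < q z := by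
    simpa only [mul_comm] using exists_pos_mul_lt hqz (z.1 ^ 2 + z.2 ^ 2)
  have hC : 0 ≤ C := nonneg_of_mul_nonneg_left
    ((norm_nonneg _).trans (hbound z hzU)) (Real.exp_pos _)
  -- By homogeneity `q w > c |w|²` cuts out a cone, and there `exp (-q)` is Gaussian decay.
  refine fun hz ↦ hz.2 ⟨U ∩ {w | c * (w.1 ^ 2 + w.2 ^ 2) < q w},
    ⟨hU.1.inter (isOpen_lt (by fun_prop) hq), fun h ↦ hU.2.1 h.1, fun w hw r hr ↦ ?_⟩,
    ⟨hzU, hcz⟩, fun N ↦ ⟨C * ((N / 2 / c) ^ ((N : ℝ) / 2) * Real.exp c), fun w hw ↦ ?_⟩⟩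
  · refine ⟨hU.2.2 w hw.1 r hr, ?_⟩
    have hscaled := mul_lt_mul_of_pos_left hw.2 (pow_pos hr 2)
    simp only [Set.mem_ofPred_eq, hq_smul r hr, Prod.smul_fst, Prod.smul_snd, smul_eq_mul]
    linarith
  · calc (1 + w.1 ^ 2 + w.2 ^ 2) ^ ((N : ℝ) / 2) * ‖STFT u w.1 w.2‖
        ≤ (1 + w.1 ^ 2 + w.2 ^ 2) ^ ((N : ℝ) / 2) *
            (C * Real.exp (-(c * (w.1 ^ 2 + w.2 ^ 2)))) := by
          gcongr
          exact (hbound w hw.1).trans (by gcongr; exact hw.2.le)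
      _ = C * ((1 + (w.1 ^ 2 + w.2 ^ 2)) ^ ((N : ℝ) / 2) *
            Real.exp (-(c * (w.1 ^ 2 + w.2 ^ 2)))) := by rw [add_assoc]; ring
      _ ≤ C * ((N / 2 / c) ^ ((N : ℝ) / 2) * Real.exp c) := by
          gcongr ?_ * ?_
          exact rpow_one_add_mul_exp_neg_le hc (by positivity) (by positivity)

theorem tendsto_pow_mul_norm_STFT_of_notMem_gaborWF (hz0 : z ≠ 0) (hz : z ∉ gaborWF u) (k : ℕ) :
    Tendsto (fun r : ℝ ↦ r ^ k * ‖STFT u (r * z.1) (r * z.2)‖) atTop (𝓝 0) := by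
  obtain ⟨Γ, ⟨-, -, hΓ⟩, hzΓ, hdecay⟩ := not_not.mp fun h ↦ hz ⟨hz0, h⟩
  obtain ⟨M, hM⟩ := hdecay (2 * (k + 1))
  set s := z.1 ^ 2 + z.2 ^ 2
  have hs : 0 < s := by
    contrapose! hz0
    exact Prod.ext (sq_eq_zero_iff.mp (by linarith [sq_nonneg z.1, sq_nonneg z.2]))
      (sq_eq_zero_iff.mp (by linarith [sq_nonneg z.1, sq_nonneg z.2]))
  have hbound (r : ℝ) (hr : 0 < r) :
      r ^ k * ‖STFT u (r * z.1) (r * z.2)‖ ≤ M / s ^ (k + 1) * (r ^ (k + 2))⁻¹ := by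
    have hMr := hM _ (hΓ z hzΓ r hr)
    have hexp : ((2 * (k + 1) : ℕ) : ℝ) / 2 = (k + 1 : ℕ) := by
      rw [Nat.cast_mul, Nat.cast_two, mul_div_cancel_left₀ _ two_ne_zero]
    rw [hexp, Real.rpow_natCast] at hMr
    rw [← div_eq_mul_inv, div_div, le_div_iff₀ (by positivity)]
    calc r ^ k * ‖STFT u (r * z.1) (r * z.2)‖ * (s ^ (k + 1) * r ^ (k + 2))
        = (r ^ 2 * s) ^ (k + 1) * ‖STFT u (r * z.1) (r * z.2)‖ := by
          rw [mul_pow]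
          ring
      _ ≤ (1 + (r * z.1) ^ 2 + (r * z.2) ^ 2) ^ (k + 1) * ‖STFT u (r * z.1) (r * z.2)‖ := by
          gcongr
          linarith
      _ ≤ M := hMr
  refine squeeze_zero' ?_ ((eventually_gt_atTop 0).mono hbound) ?_
  · filter_upwards [eventually_ge_atTop 0] with r hr using by positivity
  · simpa using (tendsto_pow_atTop (α := ℝ) (k + 1).succ_ne_zero).inv_tendsto_atTop.const_mul
      (M / s ^ (k + 1))

end WaveFrontSet

section Heaviside

/-- The Heaviside function, with the convention `H(0) = 1`. -/
noncomputable def heaviside : ℝ → ℂ := fun y ↦ if 0 ≤ y then 1 else 0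

lemma measurable_heaviside : Measurable heaviside :=
  measurable_const.ite measurableSet_Ici measurable_const

lemma norm_heaviside_le_one (y : ℝ) : ‖heaviside y‖ ≤ 1 := by
  unfold heaviside
  split_ifs <;> simp

theorem norm_STFT_heaviside_le_of_nonpos {x : ℝ} (hx : x ≤ 0) (ξ : ℝ) :
    ‖STFT heaviside x ξ‖ ≤ √Real.pi * Real.exp (-x ^ 2) := by
  simpa using norm_STFT_le_of_eq_zero_of_mul_pos norm_heaviside_le_one
    (fun y hyx ↦ if_neg (not_le.mpr (neg_of_mul_pos_left hyx hx))) ξ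

theorem norm_STFT_one_sub_STFT_heaviside_le {x : ℝ} (hx : 0 ≤ x) (ξ : ℝ) :
    ‖STFT 1 x ξ - STFT heaviside x ξ‖ ≤ √Real.pi * Real.exp (-x ^ 2) := by
  have hsub (y : ℝ) : (1 - heaviside) y = if 0 ≤ y then 0 else 1 := by
    simp only [heaviside, Pi.sub_apply, Pi.one_apply]
    split_ifs <;> simp
  rw [← STFT_sub (A := 1) aestronglyMeasurable_one (by simp)
    measurable_heaviside.aestronglyMeasurable norm_heaviside_le_one]
  simpa using norm_STFT_le_of_eq_zero_of_mul_pos (B := 1) (fun y ↦ by rw [hsub]; split_ifs <;> simp)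
    (fun y hyx ↦ by rw [hsub, if_pos (pos_of_mul_pos_left hyx hx).le]) ξ

theorem abs_norm_STFT_heaviside_sub_le {x : ℝ} (hx : 0 ≤ x) (ξ : ℝ) :
    |‖STFT heaviside x ξ‖ - √Real.pi * Real.exp (-ξ ^ 2 / 4)| ≤
      √Real.pi * Real.exp (-x ^ 2) := by
  rw [← norm_STFT_one x ξ, abs_sub_comm]
  exact (abs_norm_sub_norm_le _ _).trans (norm_STFT_one_sub_STFT_heaviside_le hx ξ)

theorem tendsto_norm_STFT_heaviside_atTop :
    Tendsto (fun x ↦ ‖STFT heaviside x 0‖) atTop (𝓝 √Real.pi) := by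
  have herror : Tendsto (fun x : ℝ ↦ √Real.pi * Real.exp (-x ^ 2)) atTop (𝓝 0) := by
    simpa using (Real.tendsto_exp_neg_atTop_nhds_zero.comp
      (tendsto_pow_atTop two_ne_zero)).const_mul √Real.pi
  refine tendsto_iff_norm_sub_tendsto_zero.mpr (squeeze_zero' (.of_forall fun x ↦ norm_nonneg _)
    ?_ herror)
  filter_upwards [eventually_ge_atTop 0] with x hx
  simpa using abs_norm_STFT_heaviside_sub_le hx 0

lemma STFT_heaviside_eq_integral_Ioi (x ξ : ℝ) :
    STFT heaviside x ξ = ∫ y in Set.Ioi 0, gaborAtom x ξ y := by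
  rw [STFT_eq_integral_mul_gaborAtom, ← integral_Ici_eq_integral_Ioi,
    ← integral_indicator measurableSet_Ici]
  simp only [heaviside, Set.indicator, Set.mem_Ici, ite_mul, one_mul, zero_mul]

theorem tendsto_mul_STFT_heaviside_cocompact (x : ℝ) :
    Tendsto (fun ξ : ℝ ↦ I * ξ * STFT heaviside x ξ) (cocompact ℝ)
      (𝓝 (Real.exp (-x ^ 2) : ℝ)) := by
  have hderiv (y : ℝ) : HasDerivAt (fun y : ℝ ↦ ((Real.exp (-(y - x) ^ 2) : ℝ) : ℂ))
      ((-2 * ((y - x) * Real.exp (-(y - x) ^ 2)) : ℝ) : ℂ) y := by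
    refine HasDerivAt.ofReal_comp ?_
    convert! (((hasDerivAt_id y).sub_const x).pow 2).neg.exp using 1
    simp only [id_eq, Pi.neg_apply, Pi.pow_apply]
    push_cast
    ring
  have hint_deriv : Integrable fun y : ℝ ↦ -2 * ((y - x) * Real.exp (-(y - x) ^ 2)) := by
    simpa using ((integrable_mul_exp_neg_mul_sq one_pos).comp_sub_right x).const_mul (-2)
  have hlim := tendsto_smul_integral_Ioi_exp_smul_cocompact
    (hderiv 0).continuousAt.continuousWithinAt (fun y _ ↦ hderiv y)
    (integrable_exp_neg_sub_sq x).ofReal.integrableOn hint_deriv.ofReal.integrableOn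
  simpa [STFT_heaviside_eq_integral_Ioi, gaborAtom] using hlim

theorem notMem_gaborWF_heaviside_of_fst_neg {z : ℝ × ℝ} (hz : z.1 < 0) :
    z ∉ gaborWF heaviside :=
  notMem_gaborWF_of_norm_STFT_le (U := {w | w.1 < 0}) (q := fun w ↦ w.1 ^ 2)
    ⟨isOpen_lt continuous_fst continuous_const, lt_irrefl (0 : ℝ),
      fun w hw r hr ↦ mul_neg_of_pos_of_neg hr hw⟩ hz (by fun_prop)
    (fun r _ w ↦ mul_pow r w.1 2) (sq_pos_of_neg hz)
    fun w hw ↦ norm_STFT_heaviside_le_of_nonpos (le_of_lt hw) w.2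

theorem notMem_gaborWF_heaviside_of_fst_pos {z : ℝ × ℝ} (hz₁ : 0 < z.1) (hz₂ : z.2 ≠ 0) :
    z ∉ gaborWF heaviside := by
  refine notMem_gaborWF_of_norm_STFT_le (U := {w | 0 < w.1})
    (q := fun w ↦ min (w.2 ^ 2 / 4) (w.1 ^ 2)) (C := √Real.pi + √Real.pi)
    ⟨isOpen_lt continuous_const continuous_fst, lt_irrefl (0 : ℝ), fun w hw r hr ↦ mul_pos hr hw⟩
    hz₁ (by fun_prop) (fun r _ w ↦ ?_) (by positivity) fun w hw ↦ ?_
  · rw [mul_min_of_nonneg _ _ (sq_nonneg r)]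
    simp only [Prod.smul_fst, Prod.smul_snd, smul_eq_mul, mul_pow, mul_div_assoc]
  · calc ‖STFT heaviside w.1 w.2‖
        ≤ √Real.pi * Real.exp (-w.2 ^ 2 / 4) + √Real.pi * Real.exp (-w.1 ^ 2) := by
          linarith [(abs_le.mp (abs_norm_STFT_heaviside_sub_le (le_of_lt hw) w.2)).2]
      _ ≤ (√Real.pi + √Real.pi) * Real.exp (-min (w.2 ^ 2 / 4) (w.1 ^ 2)) := by
          rw [add_mul, neg_div]
          gcongr
          · exact min_le_left _ _
          · exact min_le_right _ _

theorem mem_gaborWF_heaviside_of_fst_pos {z : ℝ × ℝ} (hz₁ : 0 < z.1) (hz₂ : z.2 = 0) :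
    z ∈ gaborWF heaviside := by
  by_contra hz
  have hdecay := tendsto_pow_mul_norm_STFT_of_notMem_gaborWF
    (fun h ↦ hz₁.ne' (congrArg Prod.fst h)) hz 0
  have hlim := tendsto_norm_STFT_heaviside_atTop.comp (tendsto_id.atTop_mul_const hz₁)
  simp only [pow_zero, one_mul, hz₂, mul_zero] at hdecay
  exact (Real.sqrt_pos.mpr Real.pi_pos).ne' (tendsto_nhds_unique hlim hdecay)

theorem mem_gaborWF_heaviside_of_fst_eq_zero {z : ℝ × ℝ} (hz₁ : z.1 = 0) (hz₂ : z.2 ≠ 0) :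
    z ∈ gaborWF heaviside := by
  by_contra hz
  have hdecay := (tendsto_pow_mul_norm_STFT_of_notMem_gaborWF
    (fun h ↦ hz₂ (congrArg Prod.snd h)) hz 1).const_mul |z.2|
  have hray : Tendsto (fun r : ℝ ↦ r * z.2) atTop (cocompact ℝ) :=
    (Homeomorph.mulRight₀ _ hz₂).isClosedEmbedding.tendsto_cocompact.mono_left atTop_le_cocompact
  have hlim := ((tendsto_mul_STFT_heaviside_cocompact 0).comp hray).norm
  have hdecay' : Tendsto (fun r : ℝ ↦ ‖I * (r * z.2 : ℝ) * STFT heaviside 0 (r * z.2)‖)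
      atTop (𝓝 0) := by
    rw [mul_zero] at hdecay
    refine hdecay.congr' ?_
    filter_upwards [eventually_gt_atTop 0] with r hr
    rw [hz₁, mul_zero, norm_mul, norm_mul, norm_I, one_mul, norm_real, Real.norm_eq_abs, abs_mul,
      abs_of_pos hr]
    ring
  simpa using tendsto_nhds_unique hlim hdecay'

end Heaviside

/-- Proposition: Gabor wave front set of the Heaviside function.  With
`H(y) = 1` for `y ≥ 0` and `H(y) = 0` for `y < 0`,
`WF(H) = ({0} × (ℝ \ {0})) ∪ (ℝ₊ × {0})`. -/
theorem stmt_16 :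
    gaborWF (fun y : ℝ => if 0 ≤ y then (1 : ℂ) else 0)
      = {z : ℝ × ℝ | z.1 = 0 ∧ z.2 ≠ 0} ∪ {z : ℝ × ℝ | 0 < z.1 ∧ z.2 = 0} := by
  change gaborWF heaviside = _
  ext z
  constructor
  · intro hz
    rcases lt_trichotomy z.1 0 with hneg | hzero | hpos
    · exact absurd hz (notMem_gaborWF_heaviside_of_fst_neg hneg)
    · exact Or.inl ⟨hzero, fun h ↦ hz.1 (Prod.ext hzero h)⟩
    · exact Or.inr ⟨hpos, by_contra fun h ↦ notMem_gaborWF_heaviside_of_fst_pos hpos h hz⟩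
  · rintro (⟨hzero, hne⟩ | ⟨hpos, hzero⟩)
    · exact mem_gaborWF_heaviside_of_fst_eq_zero hzero hne
    · exact mem_gaborWF_heaviside_of_fst_pos hpos hzero

end Stmt16
end

section
/- Let A ∈ ℝ^{d×d} be symmetric positive semidefinite and let u(y) = exp(−⟨y, A y⟩) for y ∈ ℝ^d. Then the Gabor wave front set of u equals WF(u) = ( Ker A \ {0} ) × {0} ⊆ ℝ^{2d} \ {0}, where Ker A = { x ∈ ℝ^d : A x = 0 }. -/
open MeasureTheory Matrix

namespace Stmt17

/-- Gaussian-window short-time Fourier transform of `u : ℝ^d → ℂ`: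
`Vu(x,ξ) = ∫ u(y) e^{−i⟨y,ξ⟩} e^{−|y−x|²} dy`. -/
noncomputable def STFT (d : ℕ) (u : (Fin d → ℝ) → ℂ) (x ξ : Fin d → ℝ) : ℂ :=
  ∫ y : Fin d → ℝ, u y * Complex.exp (-(Complex.I) * ((∑ j, y j * ξ j : ℝ) : ℂ))
    * Complex.exp (-((∑ j, (y j - x j) ^ 2 : ℝ) : ℂ))

/-- An open cone in `ℝ^{2d} \ {0}`. -/
def IsOpenCone (d : ℕ) (Γ : Set ((Fin d → ℝ) × (Fin d → ℝ))) : Prop :=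
  IsOpen Γ ∧ (0 : (Fin d → ℝ) × (Fin d → ℝ)) ∉ Γ ∧ ∀ z ∈ Γ, ∀ r : ℝ, 0 < r → r • z ∈ Γ

/-- The Gabor wave front set of `u : ℝ^d → ℂ`: the set of `z₀ ∈ ℝ^{2d} \ {0}` such that
there is no open cone containing `z₀` on which `Vu` decays faster than any power of
`(1+|z|²)^{1/2}`, where `|z|` is the Euclidean norm. -/
def gaborWF (d : ℕ) (u : (Fin d → ℝ) → ℂ) : Set ((Fin d → ℝ) × (Fin d → ℝ)) :=
  {z | z ≠ 0 ∧ ¬ ∃ Γ : Set ((Fin d → ℝ) × (Fin d → ℝ)), IsOpenCone d Γ ∧ z ∈ Γ ∧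
    ∀ N : ℕ, ∃ M : ℝ, ∀ w ∈ Γ,
      (1 + (∑ j, w.1 j ^ 2) + (∑ j, w.2 j ^ 2)) ^ ((N : ℝ) / 2)
        * ‖STFT d u w.1 w.2‖ ≤ M}

/-! Completing the square in a Gaussian integral gives `|Vu(z)| = C exp(-F(z))` with `C > 0` and,
for `B = 1 + A`, the quadratic form `F(x, ξ) = ⟨x, (1 - B⁻¹) x⟩ + ⟨ξ, B⁻¹ ξ⟩ / 4`. By homogeneity
and continuity, `Vu` decays superpolynomially on a cone around each point where `F > 0`, and it does
not decay along a ray where `F ≤ 0`. Both `1 - B⁻¹ = B⁻¹ (A + A²) B⁻¹` and `B⁻¹` are positive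
semidefinite, the former with kernel `Ker A` and the latter with trivial kernel, so
`F ≤ 0` precisely on `Ker A × {0}`. -/

section MatrixGaussian

variable {ι : Type*} [Fintype ι]

lemma re_dotProduct_map_ofReal_mulVec (M : Matrix ι ι ℝ) (w : ι → ℂ) :
    (w ⬝ᵥ M.map Complex.ofReal *ᵥ w).re
      = (Complex.re ∘ w) ⬝ᵥ M *ᵥ (Complex.re ∘ w) - (Complex.im ∘ w) ⬝ᵥ M *ᵥ (Complex.im ∘ w) := by
  simp [dotProduct, mulVec, Finset.sum_sub_distrib]

lemma integral_cexp_neg_dotProduct_self_add (w : ι → ℂ) :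
    ∫ y : ι → ℝ, Complex.exp (-((y ⬝ᵥ y : ℝ) : ℂ) + w ⬝ᵥ (Complex.ofReal ∘ y))
      = (√(Real.pi ^ Fintype.card ι) : ℝ) * Complex.exp ((w ⬝ᵥ w) / 4) := by
  have hpi : (Real.pi : ℂ) ^ (Fintype.card ι / 2 : ℂ) = (√(Real.pi ^ Fintype.card ι) : ℝ) := by
    rw [Real.sqrt_eq_rpow, ← Real.rpow_natCast, ← Real.rpow_mul Real.pi_nonneg, mul_one_div,
      Complex.ofReal_cpow Real.pi_nonneg]
    push_cast
    rfl
  have h := GaussianFourier.integral_cexp_neg_mul_sum_add (b := 1) (by simp) w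
  simpa [dotProduct, sq, hpi] using h

open scoped ComplexOrder MatrixOrder in
lemma exists_eq_conjTranspose_mul_self {𝕜 : Type*} [RCLike 𝕜] {B : Matrix ι ι 𝕜}
    (hB : B.PosSemidef) : ∃ P : Matrix ι ι 𝕜, B = Pᴴ * P := by
  classical
  exact CStarAlgebra.nonneg_iff_eq_star_mul_self.mp hB.nonneg

variable [DecidableEq ι]

lemma integral_comp_mulVec {E : Type*} [NormedAddCommGroup E] [NormedSpace ℝ E]
    {P : Matrix ι ι ℝ} (hP : P.det ≠ 0) (f : (ι → ℝ) → E) :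
    ∫ y, f (P *ᵥ y) = |P.det|⁻¹ • ∫ s, f s := by
  have hemb : MeasurableEmbedding (toLin' P) :=
    (toLin' P).continuous_of_finiteDimensional.measurableEmbedding
      (mulVec_injective_of_det_ne_zero hP)
  rw [← abs_inv, ← ENNReal.toReal_ofReal (abs_nonneg P.det⁻¹), ← integral_smul_measure,
    ← Real.map_matrix_volume_pi_eq_smul_volume_pi hP, hemb.integral_map]
  rfl

lemma integral_cexp_neg_dotProduct_mulVec_add {B : Matrix ι ι ℝ} (hB : B.PosDef) (w : ι → ℂ) :
    ∫ y : ι → ℝ, Complex.exp (-((y ⬝ᵥ B *ᵥ y : ℝ) : ℂ) + w ⬝ᵥ (Complex.ofReal ∘ y))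
      = (√(Real.pi ^ Fintype.card ι / B.det) : ℝ)
        * Complex.exp ((w ⬝ᵥ B⁻¹.map Complex.ofReal *ᵥ w) / 4) := by
  obtain ⟨P, rfl⟩ := exists_eq_conjTranspose_mul_self hB.posSemidef
  rw [conjTranspose_eq_transpose_of_trivial] at hB ⊢
  have hdet : (Pᵀ * P).det = P.det ^ 2 := by rw [det_mul, det_transpose, sq]
  have hP : P.det ≠ 0 := fun h => hB.det_pos.ne' (by rw [hdet, h, zero_pow two_ne_zero])
  set Q : Matrix ι ι ℂ := P⁻¹.map Complex.ofReal
  have hQP (y : ι → ℝ) : Q *ᵥ (Complex.ofReal ∘ (P *ᵥ y)) = Complex.ofReal ∘ y := by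
    ext i
    have hmap := RingHom.map_mulVec Complex.ofRealHom P⁻¹ (P *ᵥ y) i
    rw [mulVec_mulVec, nonsing_inv_mul _ hP.isUnit, one_mulVec] at hmap
    exact hmap.symm
  have hsq : (w ᵥ* Q) ⬝ᵥ (w ᵥ* Q) = w ⬝ᵥ (Pᵀ * P)⁻¹.map Complex.ofReal *ᵥ w := by
    have hQQ : Q * Qᵀ = (Pᵀ * P)⁻¹.map Complex.ofReal := by
      rw [Matrix.mul_inv_rev, ← transpose_nonsing_inv]
      exact (Matrix.map_mul (f := Complex.ofRealHom)).symm
    rw [← hQQ, ← mulVec_mulVec, mulVec_transpose, dotProduct_mulVec]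
  have hsubst (y : ι → ℝ) :
      Complex.exp (-((y ⬝ᵥ (Pᵀ * P) *ᵥ y : ℝ) : ℂ) + w ⬝ᵥ (Complex.ofReal ∘ y))
        = Complex.exp (-(((P *ᵥ y) ⬝ᵥ (P *ᵥ y) : ℝ) : ℂ)
          + (w ᵥ* Q) ⬝ᵥ (Complex.ofReal ∘ (P *ᵥ y))) := by
    rw [← dotProduct_mulVec, hQP, ← mulVec_mulVec, dotProduct_mulVec y, vecMul_transpose]
  simp_rw [hsubst]
  rw [integral_comp_mulVec hP (fun s => Complex.exp (-((s ⬝ᵥ s : ℝ) : ℂ)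
      + (w ᵥ* Q) ⬝ᵥ (Complex.ofReal ∘ s))), integral_cexp_neg_dotProduct_self_add, hsq, hdet,
    Real.sqrt_div' _ (sq_nonneg _), Real.sqrt_sq_eq_abs, Complex.real_smul, ← mul_assoc,
    ← Complex.ofReal_mul, inv_mul_eq_div]

end MatrixGaussian

section OneSubInv

variable {ι : Type*} [Fintype ι] [DecidableEq ι]

open scoped ComplexOrder in
lemma posSemidef_one_sub_inv_one_add {𝕜 : Type*} [RCLike 𝕜] {A : Matrix ι ι 𝕜}
    (hA : A.PosSemidef) : (1 - (1 + A)⁻¹).PosSemidef := by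
  have hB : (1 + A).PosDef := PosDef.one.add_posSemidef hA
  have hdet : IsUnit (1 + A).det := (isUnit_iff_isUnit_det _).mp hB.isUnit
  have hconj : 1 - (1 + A)⁻¹ = ((1 + A)⁻¹)ᴴ * (A + A * Aᴴ) * (1 + A)⁻¹ := by
    have hfactor : A + A * A = (1 + A) * (1 + A) - (1 + A) := by noncomm_ring
    rw [hB.inv.isHermitian.eq, hA.isHermitian.eq, hfactor, mul_sub, nonsing_inv_mul _ hdet,
      ← mul_assoc, nonsing_inv_mul _ hdet, one_mul, sub_mul, mul_nonsing_inv _ hdet, one_mul]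
  rw [hconj]
  exact (hA.add (posSemidef_self_mul_conjTranspose A)).conjTranspose_mul_mul_same _

lemma one_sub_inv_one_add_mulVec_eq_zero_iff {R : Type*} [CommRing R] {A : Matrix ι ι R}
    (hA : IsUnit (1 + A).det) (x : ι → R) :
    (1 - (1 + A)⁻¹) *ᵥ x = 0 ↔ A *ᵥ x = 0 := by
  have hcomm : (1 + A) * (1 - (1 + A)⁻¹) = A := by
    rw [mul_sub, mul_nonsing_inv _ hA, mul_one, add_sub_cancel_left]
  have hinj := mulVec_injective_of_isUnit ((isUnit_iff_isUnit_det _).mpr hA)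
  rw [← hinj.eq_iff, mulVec_zero, mulVec_mulVec, hcomm]

end OneSubInv

section PhaseSpace

variable {d : ℕ}

/-- The squared Euclidean norm of a phase-space point, written out because the product type
carries the supremum norm. -/
def phaseNormSq (z : (Fin d → ℝ) × (Fin d → ℝ)) : ℝ :=
  (∑ j, z.1 j ^ 2) + ∑ j, z.2 j ^ 2

lemma phaseNormSq_nonneg (z : (Fin d → ℝ) × (Fin d → ℝ)) : 0 ≤ phaseNormSq z := by
  unfold phaseNormSq
  positivity

lemma phaseNormSq_pos {z : (Fin d → ℝ) × (Fin d → ℝ)} (hz : z ≠ 0) : 0 < phaseNormSq z := by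
  refine (phaseNormSq_nonneg z).lt_of_ne' fun h => hz ?_
  obtain ⟨h₁, h₂⟩ := (add_eq_zero_iff_of_nonneg (by positivity) (by positivity)).mp h
  ext j
  · simpa using (Finset.sum_eq_zero_iff_of_nonneg fun j _ => sq_nonneg (z.1 j)).mp h₁ j
  · simpa using (Finset.sum_eq_zero_iff_of_nonneg fun j _ => sq_nonneg (z.2 j)).mp h₂ j

lemma phaseNormSq_smul (r : ℝ) (z : (Fin d → ℝ) × (Fin d → ℝ)) :
    phaseNormSq (r • z) = r ^ 2 * phaseNormSq z := by
  simp [phaseNormSq, mul_pow, ← Finset.mul_sum, mul_add]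

lemma continuous_phaseNormSq : Continuous (phaseNormSq (d := d)) := by
  unfold phaseNormSq
  fun_prop

lemma one_add_rpow_mul_exp_neg_le {a p s : ℝ} (ha : 0 < a) (hp : 0 ≤ p) (hs : 0 ≤ s) :
    (1 + s) ^ p * Real.exp (-(a * s)) ≤ (p / a) ^ p * Real.exp a := by
  have hpow := ProbabilityTheory.rpow_abs_le_mul_exp_abs (1 + s) hp ha.ne'
  rw [abs_of_pos ha, abs_of_pos (by positivity : 0 < 1 + s)] at hpow
  calc (1 + s) ^ p * Real.exp (-(a * s))
      ≤ (p / a) ^ p * Real.exp (a * (1 + s)) * Real.exp (-(a * s)) := by gcongr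
    _ = (p / a) ^ p * Real.exp a := by
      rw [mul_assoc, ← Real.exp_add]
      ring_nf

lemma isOpenCone_setOf_mul_phaseNormSq_lt {F : (Fin d → ℝ) × (Fin d → ℝ) → ℝ}
    (hF : Continuous F) (hF_smul : ∀ (r : ℝ) z, F (r • z) = r ^ 2 * F z) (a : ℝ) :
    IsOpenCone d {z | a * phaseNormSq z < F z} := by
  refine ⟨isOpen_lt (continuous_const.mul continuous_phaseNormSq) hF, ?_, fun z hz r hr => ?_⟩
  · have hF0 : F 0 = 0 := by simpa using hF_smul 0 0
    simp [hF0, phaseNormSq]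
  · rw [Set.mem_ofPred_eq, hF_smul, phaseNormSq_smul, mul_left_comm]
    exact mul_lt_mul_of_pos_left hz (pow_pos hr 2)

lemma notMem_gaborWF_of_norm_STFT_le {u : (Fin d → ℝ) → ℂ} {C : ℝ}
    {F : (Fin d → ℝ) × (Fin d → ℝ) → ℝ} (hF : Continuous F)
    (hF_smul : ∀ (r : ℝ) z, F (r • z) = r ^ 2 * F z)
    (hu : ∀ x ξ, ‖STFT d u x ξ‖ ≤ C * Real.exp (-F (x, ξ)))
    {z : (Fin d → ℝ) × (Fin d → ℝ)} (hz : 0 < F z) : z ∉ gaborWF d u := by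
  obtain ⟨a, ha, haz⟩ : ∃ a > 0, a * phaseNormSq z < F z := by
    have hS := phaseNormSq_nonneg z
    refine ⟨F z / (phaseNormSq z + 1), by positivity, ?_⟩
    rw [div_mul_eq_mul_div, div_lt_iff₀ (by positivity)]
    exact mul_lt_mul_of_pos_left (lt_add_one _) hz
  have hC : 0 ≤ C := nonneg_of_mul_nonneg_left ((norm_nonneg _).trans (hu 0 0)) (Real.exp_pos _)
  refine fun hmem => hmem.2
    ⟨_, isOpenCone_setOf_mul_phaseNormSq_lt hF hF_smul a, haz, fun N => ?_⟩
  refine ⟨C * ((N / 2 / a) ^ ((N : ℝ) / 2) * Real.exp a), fun w hw => ?_⟩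
  calc (1 + (∑ j, w.1 j ^ 2) + ∑ j, w.2 j ^ 2) ^ ((N : ℝ) / 2) * ‖STFT d u w.1 w.2‖
      ≤ (1 + phaseNormSq w) ^ ((N : ℝ) / 2) * (C * Real.exp (-(a * phaseNormSq w))) := by
        rw [add_assoc, ← phaseNormSq]
        have := phaseNormSq_nonneg w
        have hC_exp : ‖STFT d u w.1 w.2‖ ≤ C * Real.exp (-(a * phaseNormSq w)) := by
          refine (hu _ _).trans ?_
          gcongr
          exact hw.le
        exact mul_le_mul_of_nonneg_left hC_exp (by positivity)
    _ = C * ((1 + phaseNormSq w) ^ ((N : ℝ) / 2) * Real.exp (-(a * phaseNormSq w))) :=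
        mul_left_comm _ _ _
    _ ≤ C * ((N / 2 / a) ^ ((N : ℝ) / 2) * Real.exp a) :=
        mul_le_mul_of_nonneg_left
          (one_add_rpow_mul_exp_neg_le ha (by positivity) (phaseNormSq_nonneg w)) hC

lemma mem_gaborWF_of_le_norm_STFT_smul {u : (Fin d → ℝ) → ℂ} {c : ℝ} (hc : 0 < c)
    {z : (Fin d → ℝ) × (Fin d → ℝ)} (hz : z ≠ 0)
    (hu : ∀ r : ℝ, 0 < r → c ≤ ‖STFT d u (r • z.1) (r • z.2)‖) : z ∈ gaborWF d u := by
  refine ⟨hz, ?_⟩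
  rintro ⟨Γ, ⟨-, -, hΓ⟩, hzΓ, hdecay⟩
  obtain ⟨M, hM⟩ := hdecay 2
  have hbound (r : ℝ) (hr : 0 < r) : (1 + r ^ 2 * phaseNormSq z) * c ≤ M := by
    have hMr := hM (r • z) (hΓ z hzΓ r hr)
    rw [add_assoc, Nat.cast_ofNat, div_self two_ne_zero, Real.rpow_one] at hMr
    rw [← phaseNormSq_smul]
    refine le_trans ?_ hMr
    have := phaseNormSq_nonneg (r • z)
    exact mul_le_mul_of_nonneg_left (hu r hr) (by positivity)
  have htendsto : Filter.Tendsto (fun r : ℝ => (1 + r ^ 2 * phaseNormSq z) * c)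
      Filter.atTop Filter.atTop :=
    (Filter.tendsto_atTop_add_const_left _ _ ((Filter.tendsto_pow_atTop two_ne_zero).atTop_mul_const
      (phaseNormSq_pos hz))).atTop_mul_const hc
  obtain ⟨r, hMr, hr⟩ :=
    ((htendsto.eventually_gt_atTop M).and (Filter.eventually_gt_atTop 0)).exists
  exact (hbound r hr).not_gt hMr

theorem gaborWF_eq_of_norm_STFT_eq {u : (Fin d → ℝ) → ℂ} {C : ℝ} (hC : 0 < C)
    {F : (Fin d → ℝ) × (Fin d → ℝ) → ℝ} (hF : Continuous F)
    (hF_smul : ∀ (r : ℝ) z, F (r • z) = r ^ 2 * F z)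
    (hu : ∀ x ξ, ‖STFT d u x ξ‖ = C * Real.exp (-F (x, ξ))) :
    gaborWF d u = {z | z ≠ 0 ∧ F z ≤ 0} := by
  ext z
  refine ⟨fun hz => ⟨hz.1, ?_⟩, fun ⟨hz, hFz⟩ => mem_gaborWF_of_le_norm_STFT_smul hC hz ?_⟩
  · by_contra! hFz
    exact notMem_gaborWF_of_norm_STFT_le hF hF_smul (fun x ξ => (hu x ξ).le) hFz hz
  · intro r _
    have hFr : F (r • z.1, r • z.2) ≤ 0 :=
      (hF_smul r z).trans_le (mul_nonpos_of_nonneg_of_nonpos (sq_nonneg r) hFz)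
    rw [hu]
    exact le_mul_of_one_le_right hC.le (Real.one_le_exp (neg_nonneg.mpr hFr))

end PhaseSpace

section GaussianSTFT

variable {d : ℕ} {A : Matrix (Fin d) (Fin d) ℝ}

/-- The quadratic form on phase space governing the decay of the short-time Fourier transform of
`u(y) = exp(−⟨y, A y⟩)`: if `1 + A` is positive definite, then `|Vu(z)|` is
`exp(-stftExponent A z)` up to a constant factor. -/
noncomputable def stftExponent (A : Matrix (Fin d) (Fin d) ℝ)
    (z : (Fin d → ℝ) × (Fin d → ℝ)) : ℝ :=
  z.1 ⬝ᵥ (1 - (1 + A)⁻¹) *ᵥ z.1 + (z.2 ⬝ᵥ (1 + A)⁻¹ *ᵥ z.2) / 4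

lemma continuous_stftExponent : Continuous (stftExponent A) := by
  unfold stftExponent
  fun_prop

lemma stftExponent_smul (r : ℝ) (z : (Fin d → ℝ) × (Fin d → ℝ)) :
    stftExponent A (r • z) = r ^ 2 * stftExponent A z := by
  simp only [stftExponent, Prod.smul_fst, Prod.smul_snd, mulVec_smul, smul_dotProduct,
    dotProduct_smul, smul_eq_mul]
  ring

lemma stftExponent_nonpos_iff (hA : A.PosSemidef) (z : (Fin d → ℝ) × (Fin d → ℝ)) :
    stftExponent A z ≤ 0 ↔ A *ᵥ z.1 = 0 ∧ z.2 = 0 := by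
  have hB : (1 + A).PosDef := PosDef.one.add_posSemidef hA
  have hdet : IsUnit (1 + A).det := (isUnit_iff_isUnit_det _).mp hB.isUnit
  have hD := posSemidef_one_sub_inv_one_add hA
  have hx : 0 ≤ z.1 ⬝ᵥ (1 - (1 + A)⁻¹) *ᵥ z.1 := hD.dotProduct_mulVec_nonneg z.1
  have hξ : 0 ≤ z.2 ⬝ᵥ (1 + A)⁻¹ *ᵥ z.2 := hB.inv.posSemidef.dotProduct_mulVec_nonneg z.2
  have hx_zero : z.1 ⬝ᵥ (1 - (1 + A)⁻¹) *ᵥ z.1 = 0 ↔ A *ᵥ z.1 = 0 :=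
    (hD.dotProduct_mulVec_zero_iff z.1).trans (one_sub_inv_one_add_mulVec_eq_zero_iff hdet z.1)
  have hξ_zero : z.2 ⬝ᵥ (1 + A)⁻¹ *ᵥ z.2 = 0 ↔ z.2 = 0 :=
    (hB.inv.posSemidef.dotProduct_mulVec_zero_iff z.2).trans
      ((mulVec_injective_of_isUnit hB.inv.isUnit).eq_iff' (mulVec_zero _))
  rw [← hx_zero, ← hξ_zero, stftExponent]
  constructor
  · intro h
    constructor <;> linarith
  · rintro ⟨h₁, h₂⟩
    simp [h₁, h₂]

/-- The coefficient `2x - iξ` of the part of the exponent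
`-⟨y, A y⟩ - i⟨y, ξ⟩ - |y - x|²` that is linear in `y`. -/
noncomputable def linearCoeff (x ξ : Fin d → ℝ) : Fin d → ℂ :=
  fun j => 2 * x j - Complex.I * ξ j

lemma gaussian_mul_cexp_mul_window_eq (A : Matrix (Fin d) (Fin d) ℝ) (x ξ y : Fin d → ℝ) :
    (Real.exp (-(∑ j, y j * A.mulVec y j)) : ℂ)
        * Complex.exp (-(Complex.I) * ((∑ j, y j * ξ j : ℝ) : ℂ))
        * Complex.exp (-((∑ j, (y j - x j) ^ 2 : ℝ) : ℂ))
      = Complex.exp (-((x ⬝ᵥ x : ℝ) : ℂ)) * Complex.exp (-((y ⬝ᵥ (1 + A) *ᵥ y : ℝ) : ℂ)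
        + linearCoeff x ξ ⬝ᵥ (Complex.ofReal ∘ y)) := by
  have hquad : y ⬝ᵥ (1 + A) *ᵥ y = y ⬝ᵥ y + ∑ j, y j * A.mulVec y j := by
    rw [add_mulVec, one_mulVec, dotProduct_add]
    rfl
  have hwindow : ∑ j, (y j - x j) ^ 2 = y ⬝ᵥ y - 2 * (x ⬝ᵥ y) + x ⬝ᵥ x := by
    simp only [dotProduct, Finset.mul_sum, ← Finset.sum_sub_distrib, ← Finset.sum_add_distrib]
    exact Finset.sum_congr rfl fun j _ => by ring
  have hlinear : linearCoeff x ξ ⬝ᵥ (Complex.ofReal ∘ y)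
      = 2 * ((x ⬝ᵥ y : ℝ) : ℂ) - Complex.I * ((∑ j, y j * ξ j : ℝ) : ℂ) := by
    simp only [linearCoeff, dotProduct, Function.comp_apply, Complex.ofReal_sum, Complex.ofReal_mul,
      Finset.mul_sum, ← Finset.sum_sub_distrib]
    exact Finset.sum_congr rfl fun j _ => by ring
  rw [hquad, hwindow, hlinear, Complex.ofReal_exp, ← Complex.exp_add, ← Complex.exp_add,
    ← Complex.exp_add]
  push_cast
  ring_nf

lemma STFT_gaussian_eq (hA : (1 + A).PosDef) (x ξ : Fin d → ℝ) :
    STFT d (fun y => (Real.exp (-(∑ j, y j * A.mulVec y j)) : ℂ)) x ξ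
      = Complex.exp (-((x ⬝ᵥ x : ℝ) : ℂ)) * ((√(Real.pi ^ d / (1 + A).det) : ℝ) * Complex.exp
        ((linearCoeff x ξ ⬝ᵥ (1 + A)⁻¹.map Complex.ofReal *ᵥ linearCoeff x ξ) / 4)) := by
  simp_rw [STFT, gaussian_mul_cexp_mul_window_eq]
  rw [integral_const_mul, integral_cexp_neg_dotProduct_mulVec_add hA, Fintype.card_fin]

lemma norm_STFT_gaussian (hA : (1 + A).PosDef) (x ξ : Fin d → ℝ) :
    ‖STFT d (fun y => (Real.exp (-(∑ j, y j * A.mulVec y j)) : ℂ)) x ξ‖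
      = √(Real.pi ^ d / (1 + A).det) * Real.exp (-stftExponent A (x, ξ)) := by
  have hre : Complex.re ∘ linearCoeff x ξ = (2 : ℝ) • x := by ext j; simp [linearCoeff]
  have him : Complex.im ∘ linearCoeff x ξ = -ξ := by ext j; simp [linearCoeff]
  have hexponent :
      ((linearCoeff x ξ ⬝ᵥ (1 + A)⁻¹.map Complex.ofReal *ᵥ linearCoeff x ξ) / 4).re
      = x ⬝ᵥ (1 + A)⁻¹ *ᵥ x - (ξ ⬝ᵥ (1 + A)⁻¹ *ᵥ ξ) / 4 := by
    rw [Complex.div_ofNat_re, re_dotProduct_map_ofReal_mulVec, hre, him]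
    simp only [mulVec_smul, mulVec_neg, smul_dotProduct, dotProduct_smul, neg_dotProduct,
      dotProduct_neg, smul_eq_mul]
    ring
  rw [STFT_gaussian_eq hA, norm_mul, norm_mul, Complex.norm_exp, Complex.norm_exp, hexponent,
    Complex.neg_re, Complex.ofReal_re, Complex.norm_of_nonneg (Real.sqrt_nonneg _),
    mul_left_comm, ← Real.exp_add, stftExponent, sub_mulVec, one_mulVec, dotProduct_sub]
  ring_nf

end GaussianSTFT

/-- For a symmetric positive semidefinite `A ∈ ℝ^{d×d}` and
`u(y) = exp(−⟨y,Ay⟩)`, `WF(u) = (Ker A \ {0}) × {0}`. -/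
theorem stmt_17 (d : ℕ) (A : Matrix (Fin d) (Fin d) ℝ) (hA : A.IsSymm)
    (hApos : A.PosSemidef) :
    gaborWF d (fun y => (Real.exp (-(∑ j, y j * A.mulVec y j)) : ℂ))
      = {z : (Fin d → ℝ) × (Fin d → ℝ) | A.mulVec z.1 = 0 ∧ z.1 ≠ 0 ∧ z.2 = 0} := by
  have hB : (1 + A).PosDef := PosDef.one.add_posSemidef hApos
  have hC : 0 < √(Real.pi ^ d / (1 + A).det) :=
    Real.sqrt_pos.mpr (div_pos (pow_pos Real.pi_pos d) hB.det_pos)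
  rw [gaborWF_eq_of_norm_STFT_eq hC continuous_stftExponent stftExponent_smul
    (norm_STFT_gaussian hB)]
  ext ⟨x, ξ⟩
  simp only [Set.mem_ofPred_eq, stftExponent_nonpos_iff hApos, ne_eq, Prod.mk_eq_zero]
  tauto

end Stmt17
end

section
/- Let A ∈ ℂ^{d×d} be symmetric with Im A (a real symmetric matrix) positive semidefinite, and let u(y) = exp( i ⟨y, A y⟩ / 2 ) for y ∈ ℝ^d. Then the Gabor wave front set of u equals WF(u) = { (x, (Re A) x) : x ∈ Ker(Im A), x ≠ 0 } ⊆ ℝ^{2d} \ {0}, where Ker(Im A) = { x ∈ ℝ^d : (Im A) x = 0 }. -/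
open MeasureTheory Matrix

namespace Stmt18

/-- Gaussian-window short-time Fourier transform of `u : ℝ^d → ℂ`:
`Vu(x,ξ) = ∫ u(y) e^{−i⟨y,ξ⟩} e^{−|y−x|²} dy`. -/
noncomputable def STFT (d : ℕ) (u : (Fin d → ℝ) → ℂ) (x ξ : Fin d → ℝ) : ℂ :=
  ∫ y : Fin d → ℝ, u y * Complex.exp (-(Complex.I) * ((∑ j, y j * ξ j : ℝ) : ℂ))
    * Complex.exp (-((∑ j, (y j - x j) ^ 2 : ℝ) : ℂ))

/-- An open cone in `ℝ^{2d} \ {0}`. -/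
def IsOpenCone (d : ℕ) (Γ : Set ((Fin d → ℝ) × (Fin d → ℝ))) : Prop :=
  IsOpen Γ ∧ (0 : (Fin d → ℝ) × (Fin d → ℝ)) ∉ Γ ∧ ∀ z ∈ Γ, ∀ r : ℝ, 0 < r → r • z ∈ Γ

/-- The Gabor wave front set of `u : ℝ^d → ℂ`: the set of `z₀ ∈ ℝ^{2d} \ {0}` such that
there is no open cone containing `z₀` on which `Vu` decays faster than any power of
`(1+|z|²)^{1/2}`, where `|z|` is the Euclidean norm. -/
def gaborWF (d : ℕ) (u : (Fin d → ℝ) → ℂ) : Set ((Fin d → ℝ) × (Fin d → ℝ)) :=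
  {z | z ≠ 0 ∧ ¬ ∃ Γ : Set ((Fin d → ℝ) × (Fin d → ℝ)), IsOpenCone d Γ ∧ z ∈ Γ ∧
    ∀ N : ℕ, ∃ M : ℝ, ∀ w ∈ Γ,
      (1 + (∑ j, w.1 j ^ 2) + (∑ j, w.2 j ^ 2)) ^ ((N : ℝ) / 2)
        * ‖STFT d u w.1 w.2‖ ≤ M}

/-!
Completing the square at the complex saddle point `y = (2 - iA)⁻¹ (2x - iξ)` gives
`|Vu(x,ξ)| = C exp (-Q(x,ξ))` with `C > 0` and, writing `y = p + iq`,
`Q(x,ξ) = |p - x|² + |q|² + (⟨p, (Im A) p⟩ + ⟨q, (Im A) q⟩) / 2`. This is a nonnegative quadratic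
form, so `Vu` decays like a Gaussian in a conic neighbourhood of each direction where `Q > 0`, and
`|Vu|` is constant along the rays where `Q = 0`. The form vanishes exactly when the saddle point is
`x` itself and `(Im A) x = 0`, that is, when `(Im A) x = 0` and `ξ = (Re A) x`.
-/

section

open Complex

section WaveFront

variable {d : ℕ} {u : (Fin d → ℝ) → ℂ} {z : (Fin d → ℝ) × (Fin d → ℝ)}

/-- The squared Euclidean norm `|x|² + |ξ|²` on phase space, whose `Prod` and `Pi` norm is instead
the sup norm. -/
def phaseNormSq (z : (Fin d → ℝ) × (Fin d → ℝ)) : ℝ := ∑ j, z.1 j ^ 2 + ∑ j, z.2 j ^ 2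

lemma phaseNormSq_nonneg (z : (Fin d → ℝ) × (Fin d → ℝ)) : 0 ≤ phaseNormSq z := by
  unfold phaseNormSq
  positivity

lemma phaseNormSq_pos (hz : z ≠ 0) : 0 < phaseNormSq z := by
  refine (phaseNormSq_nonneg z).lt_of_ne fun h => hz ?_
  have hsq (v : Fin d → ℝ) : 0 ≤ ∑ j, v j ^ 2 := by positivity
  have hvanish (v : Fin d → ℝ) (hv : ∑ j, v j ^ 2 = 0) : v = 0 := by
    ext j
    simpa using (Finset.sum_eq_zero_iff_of_nonneg fun i _ => sq_nonneg (v i)).mp hv j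
  rw [phaseNormSq, eq_comm, add_eq_zero_iff_of_nonneg (hsq _) (hsq _)] at h
  exact Prod.ext (hvanish _ h.1) (hvanish _ h.2)

lemma phaseNormSq_smul (r : ℝ) (z : (Fin d → ℝ) × (Fin d → ℝ)) :
    phaseNormSq (r • z) = r ^ 2 * phaseNormSq z := by
  simp only [phaseNormSq, Prod.smul_fst, Prod.smul_snd, Pi.smul_apply, smul_eq_mul, mul_pow,
    mul_add, Finset.mul_sum]

lemma continuous_phaseNormSq : Continuous (phaseNormSq (d := d)) := by
  unfold phaseNormSq
  fun_prop

lemma one_add_rpow_mul_exp_neg_le {p δ s : ℝ} (hp : 0 ≤ p) (hδ : 0 < δ) (hs : 0 ≤ s) :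
    (1 + s) ^ p * Real.exp (-(δ * s)) ≤ (p / δ) ^ p * Real.exp δ := by
  have hrpow := ProbabilityTheory.rpow_abs_le_mul_exp_abs (1 + s) hp hδ.ne'
  rw [abs_of_pos hδ, abs_of_nonneg (by positivity)] at hrpow
  calc (1 + s) ^ p * Real.exp (-(δ * s))
      ≤ (p / δ) ^ p * Real.exp (δ * (1 + s)) * Real.exp (-(δ * s)) := by gcongr
    _ = (p / δ) ^ p * Real.exp δ := by
        rw [mul_assoc, ← Real.exp_add]
        ring_nf

lemma notMem_gaborWF_of_norm_STFT_le {C : ℝ} {Q : (Fin d → ℝ) × (Fin d → ℝ) → ℝ}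
    (hQ : Continuous Q) (hhom : ∀ (r : ℝ) w, Q (r • w) = r ^ 2 * Q w)
    (hV : ∀ w, ‖STFT d u w.1 w.2‖ ≤ C * Real.exp (-Q w)) (hz : 0 < Q z) : z ∉ gaborWF d u := by
  have hQ0 : Q 0 = 0 := by simpa using hhom 0 0
  have hz0 : z ≠ 0 := fun h => hz.ne' (h ▸ hQ0)
  have hC : 0 ≤ C := nonneg_of_mul_nonneg_left ((norm_nonneg _).trans (hV 0)) (Real.exp_pos _)
  obtain ⟨δ, hδ, hδz⟩ : ∃ δ > 0, δ * phaseNormSq z < Q z := by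
    have hpos := phaseNormSq_pos hz0
    exact ⟨Q z / (2 * phaseNormSq z), by positivity, by field_simp; linarith⟩
  let Γ : Set ((Fin d → ℝ) × (Fin d → ℝ)) := {w | δ * phaseNormSq w < Q w}
  have hΓ : IsOpenCone d Γ := by
    refine ⟨isOpen_lt (continuous_phaseNormSq.const_mul δ) hQ, fun h => ?_, fun w hw r hr => ?_⟩
    · simp [Γ, phaseNormSq, hQ0] at h
    · change δ * phaseNormSq (r • w) < Q (r • w)
      rw [phaseNormSq_smul, hhom, mul_left_comm]
      exact mul_lt_mul_of_pos_left hw (by positivity)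
  refine fun hmem => hmem.2 ⟨Γ, hΓ, hδz, fun N =>
    ⟨C * ((N / 2 / δ) ^ (N / 2 : ℝ) * Real.exp δ), fun w hw => ?_⟩⟩
  rw [add_assoc, ← phaseNormSq]
  have hs := phaseNormSq_nonneg w
  calc (1 + phaseNormSq w) ^ (N / 2 : ℝ) * ‖STFT d u w.1 w.2‖
      ≤ (1 + phaseNormSq w) ^ (N / 2 : ℝ) * (C * Real.exp (-(δ * phaseNormSq w))) := by
        gcongr
        exact (hV w).trans (by gcongr; exact le_of_lt hw)
    _ = C * ((1 + phaseNormSq w) ^ (N / 2 : ℝ) * Real.exp (-(δ * phaseNormSq w))) :=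
        mul_left_comm _ _ _
    _ ≤ C * ((N / 2 / δ) ^ (N / 2 : ℝ) * Real.exp δ) :=
        mul_le_mul_of_nonneg_left (one_add_rpow_mul_exp_neg_le (by positivity) hδ hs) hC

lemma mem_gaborWF_of_le_norm_STFT_smul {c : ℝ} (hz : z ≠ 0) (hc : 0 < c)
    (hV : ∀ r : ℝ, 0 < r → c ≤ ‖STFT d u (r • z.1) (r • z.2)‖) : z ∈ gaborWF d u := by
  refine ⟨hz, fun ⟨Γ, hΓ, hzΓ, hdecay⟩ => ?_⟩
  obtain ⟨M, hM⟩ := hdecay 2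
  have hpos := phaseNormSq_pos hz
  have hbound (r : ℝ) (hr : 0 < r) : (phaseNormSq z * c) * r ^ 2 ≤ M := by
    have hle := hM _ (hΓ.2.2 z hzΓ r hr)
    rw [add_assoc, ← phaseNormSq, phaseNormSq_smul, Nat.cast_ofNat, div_self two_ne_zero,
      Real.rpow_one] at hle
    refine le_trans ?_ hle
    calc (phaseNormSq z * c) * r ^ 2 = r ^ 2 * phaseNormSq z * c := by ring
      _ ≤ (1 + r ^ 2 * phaseNormSq z) * ‖STFT d u (r • z.1) (r • z.2)‖ := by
        gcongr
        · linarith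
        · exact hV r hr
  have hunbounded : Filter.Tendsto (fun r : ℝ => (phaseNormSq z * c) * r ^ 2) Filter.atTop
      Filter.atTop := (Filter.tendsto_pow_atTop two_ne_zero).const_mul_atTop (by positivity)
  obtain ⟨r, hMr, hr⟩ := ((hunbounded.eventually_gt_atTop M).and
    (Filter.eventually_gt_atTop 0)).exists
  exact (hbound r hr).not_gt hMr

lemma gaborWF_eq_of_norm_STFT_eq {c : ℝ} {Q : (Fin d → ℝ) × (Fin d → ℝ) → ℝ} (hc : 0 < c)
    (hQ : Continuous Q) (hhom : ∀ (r : ℝ) w, Q (r • w) = r ^ 2 * Q w)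
    (hV : ∀ w, ‖STFT d u w.1 w.2‖ = c * Real.exp (-Q w)) :
    gaborWF d u = {z | z ≠ 0 ∧ Q z ≤ 0} := by
  ext z
  refine ⟨fun hz => ⟨hz.1, not_lt.mp fun hpos => ?_⟩, fun ⟨hz, hQz⟩ => ?_⟩
  · exact notMem_gaborWF_of_norm_STFT_le hQ hhom (fun w => (hV w).le) hpos hz
  · refine mem_gaborWF_of_le_norm_STFT_smul hz hc fun r _ => ?_
    have hnonpos : Q (r • z) ≤ 0 := hhom r z ▸ mul_nonpos_of_nonneg_of_nonpos (sq_nonneg r) hQz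
    calc c ≤ c * Real.exp (-Q (r • z)) :=
          le_mul_of_one_le_right hc.le (Real.one_le_exp (neg_nonneg.mpr hnonpos))
      _ = ‖STFT d u (r • z.1) (r • z.2)‖ := (hV (r • z)).symm

end WaveFront
section Matrix

variable {ι : Type*} [Fintype ι]

lemma dotProduct_mulVec_comm_of_isSymm {R : Type*} [CommSemiring R] {A : Matrix ι ι R}
    (hA : A.IsSymm) (v w : ι → R) : v ⬝ᵥ A *ᵥ w = w ⬝ᵥ A *ᵥ v := by
  rw [← dotProduct_transpose_mulVec, hA.eq]

lemma re_dotProduct (v w : ι → ℂ) :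
    (v ⬝ᵥ w).re = (re ∘ v) ⬝ᵥ (re ∘ w) - (im ∘ v) ⬝ᵥ (im ∘ w) := by
  simp [dotProduct]

lemma re_comp_mulVec (A : Matrix ι ι ℂ) (v : ι → ℂ) :
    re ∘ (A *ᵥ v) = A.map re *ᵥ (re ∘ v) - A.map im *ᵥ (im ∘ v) := by
  ext i
  simp [mulVec, dotProduct]

lemma im_comp_mulVec (A : Matrix ι ι ℂ) (v : ι → ℂ) :
    im ∘ (A *ᵥ v) = A.map re *ᵥ (im ∘ v) + A.map im *ᵥ (re ∘ v) := by
  ext i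
  simp [mulVec, dotProduct, Finset.sum_add_distrib]

variable [DecidableEq ι]

open scoped ComplexOrder MatrixOrder in
lemma exists_conjTranspose_mul_mul_eq_one_and_eq_diagonal {𝕜 : Type*} [RCLike 𝕜]
    {T R : Matrix ι ι 𝕜} (hT : T.PosDef) (hR : R.IsHermitian) :
    ∃ (P : Matrix ι ι 𝕜) (r : ι → ℝ),
      Pᴴ * T * P = 1 ∧ Pᴴ * R * P = diagonal (RCLike.ofReal ∘ r) := by
  obtain ⟨Y, hY, rfl⟩ := CStarAlgebra.isStrictlyPositive_iff_eq_star_mul_self.mp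
    hT.isStrictlyPositive
  have hYinv : Y * Y⁻¹ = 1 := mul_nonsing_inv Y ((isUnit_iff_isUnit_det Y).mp hY)
  have hYinv' : Y⁻¹ᴴ * Yᴴ = 1 := by rw [← conjTranspose_mul, hYinv, conjTranspose_one]
  have hK : (Y⁻¹ᴴ * R * Y⁻¹).IsHermitian := isHermitian_conjTranspose_mul_mul _ hR
  set W : Matrix ι ι 𝕜 := ↑hK.eigenvectorUnitary
  have hW : Wᴴ * W = 1 := Unitary.coe_star_mul_self hK.eigenvectorUnitary
  have hdiag : Wᴴ * (Y⁻¹ᴴ * R * Y⁻¹) * W = diagonal (RCLike.ofReal ∘ hK.eigenvalues) := by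
    rw [← hK.conjStarAlgAut_star_eigenvectorUnitary, Unitary.conjStarAlgAut_star_apply]
    rfl
  refine ⟨Y⁻¹ * W, hK.eigenvalues, ?_, ?_⟩
  · calc (Y⁻¹ * W)ᴴ * (star Y * Y) * (Y⁻¹ * W)
        = Wᴴ * (Y⁻¹ᴴ * Yᴴ) * (Y * Y⁻¹) * W := by
          simp only [conjTranspose_mul, star_eq_conjTranspose, Matrix.mul_assoc]
      _ = 1 := by rw [hYinv, hYinv', Matrix.mul_one, Matrix.mul_one, hW]
  · rw [← hdiag]
    simp only [conjTranspose_mul, Matrix.mul_assoc]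

lemma exists_transpose_mul_mul_eq_diagonal {B : Matrix ι ι ℂ} (hB : B.IsSymm)
    (hre : (B.map re).PosDef) :
    ∃ (P : Matrix ι ι ℝ) (β : ι → ℂ), P.det ≠ 0 ∧ (∀ i, 0 < (β i).re) ∧
      (P.map ofRealHom)ᵀ * B * P.map ofRealHom = diagonal β := by
  obtain ⟨P, r, hPre, hPim⟩ := exists_conjTranspose_mul_mul_eq_one_and_eq_diagonal hre
    (isHermitian_iff_isSymm.mpr (hB.map im))
  rw [conjTranspose_eq_transpose_of_trivial] at hPre hPim
  have hdecomp : B = (B.map re).map ofRealHom + I • (B.map im).map ofRealHom := by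
    ext i j
    simp [mul_comm I, re_add_im]
  refine ⟨P, fun i => 1 + I * r i, right_ne_zero_of_mul (a := (Pᵀ * B.map re).det) ?_, ?_, ?_⟩
  · simp [← det_mul, hPre]
  · simp
  · have hmap (X : Matrix ι ι ℝ) :
        (P.map ofRealHom)ᵀ * X.map ofRealHom * P.map ofRealHom = (Pᵀ * X * P).map ofRealHom := by
      simp only [Matrix.map_mul, transpose_map]
    rw [hdecomp, Matrix.mul_add, Matrix.add_mul, Matrix.mul_smul, Matrix.smul_mul, hmap, hmap,
      hPre, hPim, Matrix.map_one _ (map_zero _) (map_one _), diagonal_map (map_zero _),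
      ← diagonal_one, ← diagonal_smul, diagonal_add]
    rfl

lemma isUnit_of_posDef_map_re {B : Matrix ι ι ℂ} (hB : B.IsSymm) (hre : (B.map re).PosDef) :
    IsUnit B := by
  obtain ⟨P, β, -, hβ, hPB⟩ := exists_transpose_mul_mul_eq_diagonal hB hre
  have hunit : IsUnit (diagonal β) := isUnit_diagonal.mpr <| Pi.isUnit_iff.mpr fun i =>
    isUnit_iff_ne_zero.mpr fun h => (hβ i).ne' (by rw [h, zero_re])
  rw [← hPB, isUnit_iff_isUnit_det, det_mul, det_mul, IsUnit.mul_iff, IsUnit.mul_iff] at hunit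
  exact (isUnit_iff_isUnit_det B).mpr hunit.1.2

end Matrix

section GaussianIntegral

variable {ι : Type*} [Fintype ι]

/-- The Gaussian integral `∫ exp (-⟨t, B t⟩ / 2 + ⟨t, ζ⟩) dt` over `ℝ^ι`, with complex quadratic
form `B` and complex linear term `ζ`. -/
noncomputable def gaussianIntegral (B : Matrix ι ι ℂ) (ζ : ι → ℂ) : ℂ :=
  ∫ t : ι → ℝ, cexp (-((ofRealHom ∘ t) ⬝ᵥ B *ᵥ (ofRealHom ∘ t)) / 2 + (ofRealHom ∘ t) ⬝ᵥ ζ)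

lemma integral_eq_abs_det_smul_integral_comp_mulVec [DecidableEq ι] {E : Type*}
    [NormedAddCommGroup E] [NormedSpace ℝ E] {P : Matrix ι ι ℝ} (hP : P.det ≠ 0) (f : (ι → ℝ) → E) :
    ∫ t, f t = |P.det| • ∫ s, f (P *ᵥ s) := by
  have hemb : MeasurableEmbedding (toLin' P) :=
    (LinearMap.isClosedEmbedding_of_injective <| LinearMap.ker_eq_bot.mpr <|
      mulVec_injective_of_det_ne_zero hP).measurableEmbedding
  have hmap : ∫ s, f (P *ᵥ s) = ∫ t, f t ∂(Measure.map (toLin' P) volume) :=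
    (hemb.integral_map f).symm
  rw [hmap, Real.map_matrix_volume_pi_eq_smul_volume_pi hP, integral_smul_measure,
    ENNReal.toReal_ofReal (abs_nonneg _), smul_smul, abs_inv, mul_inv_cancel₀ (abs_ne_zero.mpr hP),
    one_smul]

lemma gaussianIntegral_eq_abs_det_mul [DecidableEq ι] {P : Matrix ι ι ℝ} (hP : P.det ≠ 0)
    (B : Matrix ι ι ℂ) (ζ : ι → ℂ) :
    gaussianIntegral B ζ = |P.det| *
      gaussianIntegral ((P.map ofRealHom)ᵀ * B * P.map ofRealHom) ((P.map ofRealHom)ᵀ *ᵥ ζ) := by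
  have hmulVec (s : ι → ℝ) : ofRealHom ∘ (P *ᵥ s) = P.map ofRealHom *ᵥ (ofRealHom ∘ s) :=
    funext fun i => ofRealHom.map_mulVec P s i
  have hquadratic (v : ι → ℂ) : (P.map ofRealHom *ᵥ v) ⬝ᵥ B *ᵥ (P.map ofRealHom *ᵥ v) =
      v ⬝ᵥ ((P.map ofRealHom)ᵀ * B * P.map ofRealHom) *ᵥ v := by
    rw [← mulVec_mulVec, ← mulVec_mulVec, dotProduct_transpose_mulVec, dotProduct_comm]
  have hlinear (v : ι → ℂ) : (P.map ofRealHom *ᵥ v) ⬝ᵥ ζ = v ⬝ᵥ (P.map ofRealHom)ᵀ *ᵥ ζ := by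
    rw [dotProduct_transpose_mulVec, dotProduct_comm]
  rw [gaussianIntegral, integral_eq_abs_det_smul_integral_comp_mulVec hP, real_smul]
  simp only [hmulVec, hquadratic, hlinear, gaussianIntegral]

lemma gaussianIntegral_diagonal [DecidableEq ι] {β : ι → ℂ} (hβ : ∀ i, 0 < (β i).re)
    (ζ : ι → ℂ) :
    gaussianIntegral (diagonal β) ζ =
      (∏ i, (Real.pi / (β i / 2)) ^ (1 / 2 : ℂ)) * cexp ((∑ i, ζ i ^ 2 / β i) / 2) := by
  have hexponent (t : ι → ℝ) :
      -((ofRealHom ∘ t) ⬝ᵥ diagonal β *ᵥ (ofRealHom ∘ t)) / 2 + (ofRealHom ∘ t) ⬝ᵥ ζ =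
        -∑ i, β i / 2 * (t i : ℂ) ^ 2 + ∑ i, ζ i * t i := by
    simp only [dotProduct, mulVec_diagonal, Function.comp_apply, ofRealHom_eq_coe, neg_div,
      Finset.sum_div, ← Finset.sum_neg_distrib, ← Finset.sum_add_distrib]
    exact Finset.sum_congr rfl fun i _ => by ring
  simp only [gaussianIntegral, hexponent]
  rw [GaussianFourier.integral_cexp_neg_sum_mul_add (by simpa using hβ), Finset.prod_mul_distrib,
    ← Complex.exp_sum, Finset.sum_div]
  congr! 3 with i
  ring

lemma gaussianIntegral_zero_ne_zero {B : Matrix ι ι ℂ} (hB : B.IsSymm)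
    (hre : (B.map re).PosDef) : gaussianIntegral B 0 ≠ 0 := by
  classical
  obtain ⟨P, β, hP, hβ, hPB⟩ := exists_transpose_mul_mul_eq_diagonal hB hre
  have hβ0 (i : ι) : β i ≠ 0 := fun h => (hβ i).ne' (by rw [h, zero_re])
  rw [gaussianIntegral_eq_abs_det_mul hP, hPB, gaussianIntegral_diagonal hβ]
  have hprod : ∏ i, (Real.pi / (β i / 2)) ^ (1 / 2 : ℂ) ≠ 0 :=
    Finset.prod_ne_zero_iff.mpr fun i _ => by simp [hβ0 i, Real.pi_ne_zero]
  exact mul_ne_zero (by simpa using hP) (mul_ne_zero hprod (exp_ne_zero _))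

-- Formally the translation `t ↦ t + v` of `ℝ^ι` by a complex vector `v`.
lemma gaussianIntegral_mulVec {B : Matrix ι ι ℂ} (hB : B.IsSymm) (hre : (B.map re).PosDef)
    (v : ι → ℂ) :
    gaussianIntegral B (B *ᵥ v) = gaussianIntegral B 0 * cexp (v ⬝ᵥ B *ᵥ v / 2) := by
  classical
  obtain ⟨P, β, hP, hβ, hPB⟩ := exists_transpose_mul_mul_eq_diagonal hB hre
  have hβ0 (i : ι) : β i ≠ 0 := fun h => (hβ i).ne' (by rw [h, zero_re])
  have hPunit : IsUnit (P.map ofRealHom) :=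
    ((isUnit_iff_isUnit_det P).mpr hP.isUnit).map ofRealHom.mapMatrix
  obtain ⟨w, rfl⟩ := mulVec_surjective_iff_isUnit.mpr hPunit v
  have hlinear : (P.map ofRealHom)ᵀ *ᵥ B *ᵥ P.map ofRealHom *ᵥ w = diagonal β *ᵥ w := by
    rw [← hPB, mulVec_mulVec, mulVec_mulVec, Matrix.mul_assoc]
  have hquadratic : (P.map ofRealHom *ᵥ w) ⬝ᵥ B *ᵥ P.map ofRealHom *ᵥ w =
      ∑ i, (diagonal β *ᵥ w) i ^ 2 / β i := by
    rw [dotProduct_comm, ← dotProduct_transpose_mulVec, hlinear]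
    refine Finset.sum_congr rfl fun i _ => ?_
    rw [mulVec_diagonal]
    field_simp [hβ0 i]
  rw [gaussianIntegral_eq_abs_det_mul hP, gaussianIntegral_eq_abs_det_mul hP B 0, hPB, hlinear,
    gaussianIntegral_diagonal hβ, gaussianIntegral_diagonal hβ, hquadratic]
  simp [mul_assoc]

end GaussianIntegral

section PhaseSpaceForm

variable {ι : Type*}

/-- The vector `2x - iξ` attached to the phase-space point `(x, ξ)`: the linear coefficient in `y`
of `-i ⟨y, ξ⟩ - |y - x|²`, the exponent of the shifted and modulated window. -/
noncomputable def linearTerm (z : (ι → ℝ) × (ι → ℝ)) : ι → ℂ :=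
  (2 : ℂ) • (ofRealHom ∘ z.1) - I • (ofRealHom ∘ z.2)

lemma re_comp_linearTerm (z : (ι → ℝ) × (ι → ℝ)) : re ∘ linearTerm z = (2 : ℝ) • z.1 := by
  ext i
  simp [linearTerm]

lemma im_comp_linearTerm (z : (ι → ℝ) × (ι → ℝ)) : im ∘ linearTerm z = -z.2 := by
  ext i
  simp [linearTerm]

lemma linearTerm_smul (r : ℝ) (z : (ι → ℝ) × (ι → ℝ)) : linearTerm (r • z) = r • linearTerm z := by
  ext i
  simp only [linearTerm, Prod.smul_fst, Prod.smul_snd, Pi.sub_apply, Pi.smul_apply,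
    Function.comp_apply, smul_eq_mul, map_mul, real_smul, ofRealHom_eq_coe]
  ring

lemma continuous_linearTerm : Continuous (linearTerm (ι := ι)) := by
  unfold linearTerm
  simp only [Function.comp_def, ofRealHom_eq_coe]
  fun_prop

variable [DecidableEq ι]

/-- The matrix `2 - iA`: the product of the chirp `exp (i ⟨y, A y⟩ / 2)` and the window
`exp (-|y|²)` is `exp (-⟨y, (2 - iA) y⟩ / 2)`. -/
noncomputable def windowedMatrix (A : Matrix ι ι ℂ) : Matrix ι ι ℂ := (2 : ℂ) • 1 - I • A

lemma windowedMatrix_map_re (A : Matrix ι ι ℂ) :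
    (windowedMatrix A).map re = (2 : ℝ) • 1 + A.map im := by
  ext i j
  by_cases hij : i = j <;> simp [windowedMatrix, hij]

lemma windowedMatrix_map_im (A : Matrix ι ι ℂ) : (windowedMatrix A).map im = -A.map re := by
  ext i j
  by_cases hij : i = j <;> simp [windowedMatrix, hij]

lemma isSymm_windowedMatrix {A : Matrix ι ι ℂ} (hA : A.IsSymm) : (windowedMatrix A).IsSymm :=
  (isSymm_one.smul _).sub (hA.smul _)

lemma posDef_windowedMatrix_map_re {A : Matrix ι ι ℂ} (hImA : (A.map im).PosSemidef) :
    ((windowedMatrix A).map re).PosDef := by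
  rw [windowedMatrix_map_re]
  exact (PosDef.one.smul two_pos).add_posSemidef hImA

variable [Fintype ι]

lemma isUnit_det_windowedMatrix {A : Matrix ι ι ℂ} (hA : A.IsSymm)
    (hImA : (A.map im).PosSemidef) : IsUnit (windowedMatrix A).det :=
  (isUnit_iff_isUnit_det _).mp <|
    isUnit_of_posDef_map_re (isSymm_windowedMatrix hA) (posDef_windowedMatrix_map_re hImA)

/-- The complex critical point `(2 - iA)⁻¹ (2x - iξ)` of the exponent of the integrand defining the
short-time Fourier transform of the chirp at `(x, ξ)`. -/
noncomputable def saddlePoint (A : Matrix ι ι ℂ) (z : (ι → ℝ) × (ι → ℝ)) : ι → ℂ :=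
  (windowedMatrix A)⁻¹ *ᵥ linearTerm z

/-- The quadratic form on phase space that is, up to an additive constant, minus the logarithm of
the modulus of the short-time Fourier transform of the chirp. It is written in terms of the saddle
point `p + iq` so that it is visibly nonnegative when `Im A` is positive semidefinite. -/
noncomputable def decayRate (A : Matrix ι ι ℂ) (z : (ι → ℝ) × (ι → ℝ)) : ℝ :=
  let p := re ∘ saddlePoint A z
  let q := im ∘ saddlePoint A z
  (p - z.1) ⬝ᵥ (p - z.1) + q ⬝ᵥ q + (p ⬝ᵥ A.map im *ᵥ p + q ⬝ᵥ A.map im *ᵥ q) / 2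

lemma decayRate_smul (A : Matrix ι ι ℂ) (r : ℝ) (z : (ι → ℝ) × (ι → ℝ)) :
    decayRate A (r • z) = r ^ 2 * decayRate A z := by
  have hsaddle : saddlePoint A (r • z) = r • saddlePoint A z := by
    rw [saddlePoint, linearTerm_smul, mulVec_smul, saddlePoint]
  have hre (v : ι → ℂ) : re ∘ (r • v) = r • (re ∘ v) := by ext; simp
  have him (v : ι → ℂ) : im ∘ (r • v) = r • (im ∘ v) := by ext; simp
  simp only [decayRate, hsaddle, hre, him, Prod.smul_fst, ← smul_sub, mulVec_smul,
    dotProduct_smul, smul_dotProduct, smul_eq_mul]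
  ring

lemma continuous_decayRate (A : Matrix ι ι ℂ) : Continuous (decayRate A) := by
  have hsaddle : Continuous (saddlePoint A) := continuous_const.matrix_mulVec continuous_linearTerm
  unfold decayRate dotProduct mulVec dotProduct
  simp only [Function.comp_def]
  fun_prop

lemma decayRate_nonneg {A : Matrix ι ι ℂ} (hImA : (A.map im).PosSemidef)
    (z : (ι → ℝ) × (ι → ℝ)) : 0 ≤ decayRate A z := by
  have hself (v : ι → ℝ) : 0 ≤ v ⬝ᵥ v := dotProduct_star_self_nonneg v
  have hform (v : ι → ℝ) : 0 ≤ v ⬝ᵥ A.map im *ᵥ v := hImA.re_dotProduct_nonneg v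
  exact add_nonneg (add_nonneg (hself _) (hself _))
    (div_nonneg (add_nonneg (hform _) (hform _)) zero_le_two)

lemma windowedMatrix_mulVec_saddlePoint {A : Matrix ι ι ℂ} (hA : A.IsSymm)
    (hImA : (A.map im).PosSemidef) (z : (ι → ℝ) × (ι → ℝ)) :
    windowedMatrix A *ᵥ saddlePoint A z = linearTerm z := by
  rw [saddlePoint, mulVec_mulVec, mul_nonsing_inv _ (isUnit_det_windowedMatrix hA hImA), one_mulVec]

lemma re_saddlePoint_equation {A : Matrix ι ι ℂ} (hA : A.IsSymm)
    (hImA : (A.map im).PosSemidef) (z : (ι → ℝ) × (ι → ℝ)) :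
    (2 : ℝ) • (re ∘ saddlePoint A z) + A.map im *ᵥ (re ∘ saddlePoint A z) +
      A.map re *ᵥ (im ∘ saddlePoint A z) = (2 : ℝ) • z.1 := by
  rw [← re_comp_linearTerm, ← windowedMatrix_mulVec_saddlePoint hA hImA, re_comp_mulVec,
    windowedMatrix_map_re, windowedMatrix_map_im, add_mulVec, smul_mulVec, one_mulVec, neg_mulVec,
    sub_neg_eq_add]

lemma im_saddlePoint_equation {A : Matrix ι ι ℂ} (hA : A.IsSymm)
    (hImA : (A.map im).PosSemidef) (z : (ι → ℝ) × (ι → ℝ)) :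
    (2 : ℝ) • (im ∘ saddlePoint A z) + A.map im *ᵥ (im ∘ saddlePoint A z) -
      A.map re *ᵥ (re ∘ saddlePoint A z) = -z.2 := by
  rw [← im_comp_linearTerm, ← windowedMatrix_mulVec_saddlePoint hA hImA, im_comp_mulVec,
    windowedMatrix_map_re, windowedMatrix_map_im, add_mulVec, smul_mulVec, one_mulVec, neg_mulVec,
    sub_eq_add_neg]

lemma re_saddlePoint_dotProduct_linearTerm {A : Matrix ι ι ℂ} (hA : A.IsSymm)
    (hImA : (A.map im).PosSemidef) (z : (ι → ℝ) × (ι → ℝ)) :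
    (saddlePoint A z ⬝ᵥ linearTerm z / 2).re = z.1 ⬝ᵥ z.1 - decayRate A z := by
  have hp := congrArg ((re ∘ saddlePoint A z) ⬝ᵥ ·) (re_saddlePoint_equation hA hImA z)
  have hq := congrArg ((im ∘ saddlePoint A z) ⬝ᵥ ·) (im_saddlePoint_equation hA hImA z)
  have hcross := dotProduct_mulVec_comm_of_isSymm (hA.map re) (re ∘ saddlePoint A z)
    (im ∘ saddlePoint A z)
  have hdiv : (saddlePoint A z ⬝ᵥ linearTerm z / 2).re = (saddlePoint A z ⬝ᵥ linearTerm z).re / 2 :=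
    div_ofNat_re _ 2
  rw [hdiv, re_dotProduct, re_comp_linearTerm, im_comp_linearTerm]
  simp only [decayRate, dotProduct_add, dotProduct_sub, sub_dotProduct, dotProduct_smul,
    dotProduct_neg, smul_eq_mul, dotProduct_comm z.1 (re ∘ saddlePoint A z)] at hp hq ⊢
  linarith

lemma saddlePoint_eq_ofReal_comp_fst {A : Matrix ι ι ℂ} (hA : A.IsSymm)
    (hImA : (A.map im).PosSemidef) {z : (ι → ℝ) × (ι → ℝ)}
    (hx : A.map im *ᵥ z.1 = 0) (hξ : z.2 = A.map re *ᵥ z.1) :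
    saddlePoint A z = ofRealHom ∘ z.1 := by
  have hre : re ∘ ofRealHom ∘ z.1 = z.1 := rfl
  have him : im ∘ ofRealHom ∘ z.1 = 0 := rfl
  have hre_eq : re ∘ (windowedMatrix A *ᵥ (ofRealHom ∘ z.1)) = re ∘ linearTerm z := by
    rw [re_comp_mulVec, hre, him, windowedMatrix_map_re, re_comp_linearTerm, mulVec_zero, sub_zero,
      add_mulVec, hx, add_zero, smul_mulVec, one_mulVec]
  have him_eq : im ∘ (windowedMatrix A *ᵥ (ofRealHom ∘ z.1)) = im ∘ linearTerm z := by
    rw [im_comp_mulVec, hre, him, windowedMatrix_map_im, im_comp_linearTerm, mulVec_zero, zero_add,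
      neg_mulVec, hξ]
  have hequation : windowedMatrix A *ᵥ (ofRealHom ∘ z.1) = linearTerm z :=
    funext fun i => Complex.ext (congrFun hre_eq i) (congrFun him_eq i)
  rw [saddlePoint, ← hequation, mulVec_mulVec,
    nonsing_inv_mul _ (isUnit_det_windowedMatrix hA hImA), one_mulVec]

lemma decayRate_eq_zero_iff {A : Matrix ι ι ℂ} (hA : A.IsSymm)
    (hImA : (A.map im).PosSemidef) (z : (ι → ℝ) × (ι → ℝ)) :
    decayRate A z = 0 ↔ A.map im *ᵥ z.1 = 0 ∧ z.2 = A.map re *ᵥ z.1 := by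
  constructor
  · intro h
    have hself (v : ι → ℝ) : 0 ≤ v ⬝ᵥ v := dotProduct_star_self_nonneg v
    have hform (v : ι → ℝ) : 0 ≤ v ⬝ᵥ A.map im *ᵥ v := hImA.re_dotProduct_nonneg v
    set p := re ∘ saddlePoint A z with hp
    set q := im ∘ saddlePoint A z with hq
    replace h : (p - z.1) ⬝ᵥ (p - z.1) + q ⬝ᵥ q +
      (p ⬝ᵥ A.map im *ᵥ p + q ⬝ᵥ A.map im *ᵥ q) / 2 = 0 := h
    have hpx : p = z.1 := sub_eq_zero.mp <| dotProduct_self_eq_zero.mp <| by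
      linarith [hself (p - z.1), hself q, hform p, hform q]
    have hq0 : q = 0 := dotProduct_self_eq_zero.mp <| by
      linarith [hself (p - z.1), hself q, hform p, hform q]
    have hre := re_saddlePoint_equation hA hImA z
    have him := im_saddlePoint_equation hA hImA z
    rw [← hp, ← hq, hpx, hq0] at hre him
    simp only [mulVec_zero, add_zero, smul_zero, zero_sub, neg_inj, add_eq_left] at hre him
    exact ⟨hre, him.symm⟩
  · rintro ⟨hx, hξ⟩
    have hre : re ∘ ofRealHom ∘ z.1 = z.1 := rfl
    have him : im ∘ ofRealHom ∘ z.1 = 0 := rfl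
    simp only [decayRate, saddlePoint_eq_ofReal_comp_fst hA hImA hx hξ, hre, him, hx, sub_self,
      mulVec_zero, dotProduct_zero, add_zero, zero_div]

end PhaseSpaceForm

section Chirp

variable {d : ℕ} {A : Matrix (Fin d) (Fin d) ℂ}

/-- The generalized Gaussian `y ↦ exp (i ⟨y, A y⟩ / 2)`. -/
noncomputable def chirp (A : Matrix (Fin d) (Fin d) ℂ) (y : Fin d → ℝ) : ℂ :=
  cexp (I * ((ofRealHom ∘ y) ⬝ᵥ A *ᵥ (ofRealHom ∘ y)) / 2)

lemma STFT_chirp (A : Matrix (Fin d) (Fin d) ℂ) (z : (Fin d → ℝ) × (Fin d → ℝ)) :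
    STFT d (chirp A) z.1 z.2 =
      cexp ↑(-(z.1 ⬝ᵥ z.1)) * gaussianIntegral (windowedMatrix A) (linearTerm z) := by
  rw [STFT, gaussianIntegral, ← integral_const_mul]
  congr 1 with y
  set Y : Fin d → ℂ := ofRealHom ∘ y with hY
  set X : Fin d → ℂ := ofRealHom ∘ z.1
  set Ξ : Fin d → ℂ := ofRealHom ∘ z.2
  have hcast (v w : Fin d → ℝ) : ((v ⬝ᵥ w : ℝ) : ℂ) = (ofRealHom ∘ v) ⬝ᵥ (ofRealHom ∘ w) :=
    ofRealHom.map_dotProduct v w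
  have hfrequency : ((∑ j, y j * z.2 j : ℝ) : ℂ) = Y ⬝ᵥ Ξ := hcast y z.2
  have hwindow : ((∑ j, (y j - z.1 j) ^ 2 : ℝ) : ℂ) = Y ⬝ᵥ Y - 2 * Y ⬝ᵥ X + X ⬝ᵥ X := by
    have hsquare : ∑ j, (y j - z.1 j) ^ 2 = y ⬝ᵥ y - 2 * y ⬝ᵥ z.1 + z.1 ⬝ᵥ z.1 := by
      simp only [dotProduct, Finset.mul_sum, ← Finset.sum_sub_distrib, ← Finset.sum_add_distrib]
      exact Finset.sum_congr rfl fun j _ => by ring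
    rw [hsquare, ofReal_add, ofReal_sub, ofReal_mul, hcast, hcast, hcast, ofReal_ofNat]
  have hcenter : (↑(-(z.1 ⬝ᵥ z.1)) : ℂ) = -(X ⬝ᵥ X) := by rw [ofReal_neg, hcast]
  have hlinear : Y ⬝ᵥ linearTerm z = 2 * Y ⬝ᵥ X - I * Y ⬝ᵥ Ξ := by
    simp only [linearTerm, dotProduct_sub, dotProduct_smul, smul_eq_mul, X, Ξ]
  have hquadratic : Y ⬝ᵥ windowedMatrix A *ᵥ Y = 2 * Y ⬝ᵥ Y - I * Y ⬝ᵥ A *ᵥ Y := by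
    simp only [windowedMatrix, sub_mulVec, smul_mulVec, one_mulVec, dotProduct_sub,
      dotProduct_smul, smul_eq_mul]
  rw [chirp, ← hY, hfrequency, hwindow, hcenter, hlinear, hquadratic, ← Complex.exp_add,
    ← Complex.exp_add, ← Complex.exp_add]
  congr 1
  ring

lemma norm_STFT_chirp (hA : A.IsSymm) (hImA : (A.map im).PosSemidef)
    (z : (Fin d → ℝ) × (Fin d → ℝ)) :
    ‖STFT d (chirp A) z.1 z.2‖ =
      ‖gaussianIntegral (windowedMatrix A) 0‖ * Real.exp (-decayRate A z) := by
  have hcomplete := gaussianIntegral_mulVec (isSymm_windowedMatrix hA)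
    (posDef_windowedMatrix_map_re hImA) (saddlePoint A z)
  rw [windowedMatrix_mulVec_saddlePoint hA hImA] at hcomplete
  rw [STFT_chirp, hcomplete, norm_mul, norm_mul, norm_exp, norm_exp, ofReal_re,
    re_saddlePoint_dotProduct_linearTerm hA hImA, mul_left_comm, ← Real.exp_add]
  congr 2
  ring

end Chirp

end

/-- For a symmetric `A ∈ ℂ^{d×d}` with `Im A` positive semidefinite and
`u(y) = exp(i⟨y, Ay⟩/2)`, `WF(u) = { (x, (Re A)x) : x ∈ Ker(Im A), x ≠ 0 }`. -/
theorem stmt_18 (d : ℕ) (A : Matrix (Fin d) (Fin d) ℂ) (hA : A.IsSymm)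
    (hImA : (A.map Complex.im).PosSemidef) :
    gaborWF d (fun y => Complex.exp (Complex.I *
        (∑ j, (y j : ℂ) * A.mulVec (fun j' => (y j' : ℂ)) j) / 2))
      = {z : (Fin d → ℝ) × (Fin d → ℝ) | (A.map Complex.im).mulVec z.1 = 0 ∧
          z.1 ≠ 0 ∧ z.2 = (A.map Complex.re).mulVec z.1} := by
  have hC : 0 < ‖gaussianIntegral (windowedMatrix A) 0‖ := norm_pos_iff.mpr <|
    gaussianIntegral_zero_ne_zero (isSymm_windowedMatrix hA) (posDef_windowedMatrix_map_re hImA)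
  change gaborWF d (chirp A) = _
  rw [gaborWF_eq_of_norm_STFT_eq hC (continuous_decayRate A) (decayRate_smul A)
    (norm_STFT_chirp hA hImA)]
  ext z
  have hnull : decayRate A z ≤ 0 ↔
      A.map Complex.im *ᵥ z.1 = 0 ∧ z.2 = A.map Complex.re *ᵥ z.1 :=
    (decayRate_nonneg hImA z).ge_iff_eq'.trans (decayRate_eq_zero_iff hA hImA z)
  simp only [Set.mem_ofPred_eq, hnull]
  constructor
  · rintro ⟨hz, hx, hξ⟩
    refine ⟨hx, fun h => hz (Prod.ext h ?_), hξ⟩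
    rw [hξ, h, mulVec_zero, Prod.snd_zero]
  · rintro ⟨hx, hz, hξ⟩
    exact ⟨fun h => hz (congrArg Prod.fst h), hx, hξ⟩

end Stmt18
end
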